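/- Suppose (Y, d, H^h) satisfies property (H∞). Then there exists an uncountable family of pairwise disjoint compact subsets of Y, each of positive H^h-measure. -/

import Mathlib

open MeasureTheory Set Filter Topology
open scoped NNReal ENNReal

universe u v

/-- A Hausdorff (gauge) function `h : [0,∞) → [0,∞]`: nondecreasing, right-continuous,
and positive on positive arguments. -/
structure IsHausdorffFunction (h : ℝ≥0 → ℝ≥0∞) : Prop where
  mono : Monotone h
  right_continuous : ∀ t : ℝ≥0, ContinuousWithinAt h (Set.Ici t) t
  pos : ∀ t : ℝ≥0, 0 < t → 0 < h t

/-- `h` is of finite order: `limsup_{t→0+} h(3t)/h(t) < ∞`. -/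
def FiniteOrder (h : ℝ≥0 → ℝ≥0∞) : Prop :=
  Filter.limsup (fun t : ℝ≥0 => h (3 * t) / h t) (nhdsWithin 0 (Set.Ioi 0)) < ⊤

/-- The Hausdorff (outer) measure built from the gauge `h`:
`H^h(E) = sup_{δ>0} inf { Σ h(diam Uᵢ) : E ⊆ ⋃ Uᵢ, diam Uᵢ ≤ δ }`. -/
noncomputable def hausdorffM {Z : Type*} [EMetricSpace Z] (h : ℝ≥0 → ℝ≥0∞) :
    MeasureTheory.OuterMeasure Z :=
  MeasureTheory.OuterMeasure.mkMetric (fun d => h d.toNNReal)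

/-- A set `S` is σ-finite with respect to an outer measure `μ` if it is a countable union
of Carathéodory-measurable sets of finite measure. -/
def SigmaFiniteSet {Z : Type*} (μ : MeasureTheory.OuterMeasure Z) (S : Set Z) : Prop :=
  ∃ A : ℕ → Set Z, (∀ n, μ.IsCaratheodory (A n) ∧ μ (A n) < ⊤) ∧ S = ⋃ n, A n

/-- A metric space has finite structural dimension if for every `ξ > 0` there are `N` and
`δ₀ > 0` such that every set of diameter `δ ≤ δ₀` can be covered by `N` sets of diameter
at most `ξ·δ`. -/
def FiniteStructuralDim (Z : Type*) [EMetricSpace Z] : Prop :=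
  ∀ ξ : ℝ≥0, 0 < ξ → ∃ (N : ℕ) (δ₀ : ℝ≥0), 0 < δ₀ ∧
    ∀ s : Set Z, EMetric.diam s ≤ δ₀ →
      ∃ U : Fin N → Set Z, s ⊆ ⋃ i, U i ∧ ∀ i, EMetric.diam (U i) ≤ ξ * EMetric.diam s

/-- Property (H) for a subspace `Y` of the complete separable metric space `Z`. -/
structure PropertyH {Z : Type*} [MetricSpace Z] (Y : Set Z) (h : ℝ≥0 → ℝ≥0∞) : Prop where
  complete : CompleteSpace Z
  separable : TopologicalSpace.SeparableSpace Z
  analytic : MeasureTheory.AnalyticSet Y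
  hausdorff : IsHausdorffFunction h
  cont : Continuous h
  zero : h 0 = 0
  alt : FiniteOrder h ∨ FiniteStructuralDim Z ∨ ∀ x y z : Z, dist x z ≤ max (dist x y) (dist y z)

/-- Property (H∞): property (H) together with non-σ-finiteness of `Y` w.r.t. `H^h`. -/
def PropertyHInf {Z : Type*} [MetricSpace Z] (Y : Set Z) (h : ℝ≥0 → ℝ≥0∞) : Prop :=
  PropertyH Y h ∧ ¬ SigmaFiniteSet (hausdorffM h) Y

/-- Property (Aκ): `X` is a union of κ-many measurable sets of finite measure, and
κ-many null sets always union to a null set. -/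
def PropertyA {X : Type u} (μ : MeasureTheory.OuterMeasure X) (κ : Cardinal.{u}) : Prop :=
  (∃ (ι : Type u) (A : ι → Set X), Cardinal.mk ι = κ ∧ (⋃ i, A i) = Set.univ ∧
      ∀ i, μ.IsCaratheodory (A i) ∧ μ (A i) < ⊤) ∧
  ∀ (ι : Type u) (A : ι → Set X), Cardinal.mk ι = κ → (∀ i, μ (A i) = 0) → μ (⋃ i, A i) = 0

/-- A set is perfect if it is closed and every open set meeting it meets it in an
infinite set. -/
def PerfectSet {X : Type*} [TopologicalSpace X] (C : Set X) : Prop :=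
  IsClosed C ∧ ∀ O : Set X, IsOpen O → (O ∩ C).Nonempty → (O ∩ C).Infinite

/-- The gauge `d ↦ d^s`. -/
noncomputable def sGauge (s : ℝ≥0) : ℝ≥0 → ℝ≥0∞ := fun d => (d : ℝ≥0∞) ^ (s : ℝ)

/-- Hausdorff–Besicovitch dimension: the supremum of all `s ≥ 0` with `H^{d^s}(E) > 0`. -/
noncomputable def hDim {Z : Type*} [EMetricSpace Z] (E : Set Z) : ℝ≥0∞ :=
  ⨆ (s : ℝ≥0) (_ : 0 < hausdorffM (sGauge s) E), (s : ℝ≥0∞)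



namespace HausAux

structure IsGauge (h : ℝ≥0 → ℝ≥0∞) : Prop where
  mono : Monotone h
  cont : Continuous h
  zero : h 0 = 0
  pos : ∀ t : ℝ≥0, 0 < t → 0 < h t

noncomputable def tau {Z : Type*} [MetricSpace Z] (h : ℝ≥0 → ℝ≥0∞) (U : Set Z) : ℝ≥0∞ :=
  h (Metric.ediam U).toNNReal

noncomputable def ct {Z : Type*} [MetricSpace Z] (h : ℝ≥0 → ℝ≥0∞) (δ : ℝ≥0∞) (A : Set Z) : ℝ≥0∞ :=
  ⨅ (t : ℕ → Set Z) (_ : A ⊆ ⋃ i, t i) (_ : ∀ i, Metric.ediam (t i) ≤ δ), ∑' i, tau h (t i)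

section basics
variable {Z : Type*} [MetricSpace Z] {h : ℝ≥0 → ℝ≥0∞}

lemma tau_empty (hg : IsGauge h) : tau h (∅ : Set Z) = 0 := by
  simp [tau, hg.zero]

lemma haus_eq (hg : IsGauge h) (A : Set Z) :
    hausdorffM h A = ⨆ (r : ℝ≥0∞) (_ : 0 < r), ct h r A := by
  letI : MeasurableSpace Z := borel Z
  haveI : BorelSpace Z := ⟨rfl⟩
  unfold hausdorffM
  rw [OuterMeasure.coe_mkMetric, Measure.mkMetric_apply]
  unfold ct
  congr! 9 with r hr t ht hd i
  rcases (t i).eq_empty_or_nonempty with h0 | h0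
  · simp [h0, tau_empty hg]
  · simp [h0, tau]

lemma ct_mono (δ : ℝ≥0∞) {A B : Set Z} (hAB : A ⊆ B) : ct h δ A ≤ ct h δ B := by
  unfold ct
  exact le_iInf fun t => le_iInf fun ht => iInf_le_of_le t (iInf_le_of_le (hAB.trans ht) le_rfl)

lemma ct_anti {δ δ' : ℝ≥0∞} (hd : δ ≤ δ') (A : Set Z) : ct h δ' A ≤ ct h δ A := by
  unfold ct
  exact le_iInf fun t => le_iInf fun ht => le_iInf fun h2 =>
    iInf_le_of_le t (iInf_le_of_le ht (iInf_le_of_le (fun i => (h2 i).trans hd) le_rfl))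

lemma ct_le_tsum (hg : IsGauge h) {ι : Type*} [Countable ι] {δ : ℝ≥0∞} {A : Set Z} (t : ι → Set Z)
    (ht : A ⊆ ⋃ i, t i) (hd : ∀ i, Metric.ediam (t i) ≤ δ) : ct h δ A ≤ ∑' i, tau h (t i) := by
  have : Encodable ι := Encodable.ofCountable _
  refine iInf_le_of_le (fun j => ⋃ b ∈ Encodable.decode₂ ι j, t b) (iInf_le_of_le ?_
    (iInf_le_of_le ?_ ?_))
  · rwa [Encodable.iUnion_decode₂]
  · intro j
    rw [Metric.ediam_iUnion_mem_option]
    exact iSup₂_le fun _ _ => hd _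
  · exact (tsum_iUnion_decode₂ (fun t : Set Z => tau h t) (tau_empty hg) _).le

lemma exists_cover {δ w : ℝ≥0∞} {A : Set Z} (hA : ct h δ A < w) :
    ∃ t : ℕ → Set Z, A ⊆ (⋃ i, t i) ∧ (∀ i, Metric.ediam (t i) ≤ δ) ∧ ∑' i, tau h (t i) < w := by
  unfold ct at hA
  simp only [iInf_lt_iff] at hA
  obtain ⟨t, a, b, c⟩ := hA
  exact ⟨t, a, b, c⟩

lemma ct_iUnion_le (hg : IsGauge h) {ι : Type*} [Countable ι] {δ : ℝ≥0∞} (A : ι → Set Z) :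
    ct h δ (⋃ i, A i) ≤ ∑' i, ct h δ (A i) := by
  refine ENNReal.le_of_forall_pos_le_add fun ε hε hfin => ?_
  obtain ⟨e, he, hes⟩ := ENNReal.exists_pos_sum_of_countable' (ε := ε) (by simpa using hε.ne') ι
  have hlt : ∀ i, ct h δ (A i) < ct h δ (A i) + e i := fun i =>
    ENNReal.lt_add_right (ENNReal.ne_top_of_tsum_ne_top hfin.ne i) (he i).ne'
  choose t ht hd hs using fun i => exists_cover (hlt i)
  refine (ct_le_tsum hg (fun p : ι × ℕ => t p.1 p.2) ?_ fun p => hd _ _).trans ?_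
  · refine iUnion_subset fun i => (ht i).trans ?_
    exact iUnion_subset fun j => subset_iUnion (fun p : ι × ℕ => t p.1 p.2) (i, j)
  · rw [ENNReal.tsum_prod (f := fun i j => tau h (t i j))]
    calc _ ≤ ∑' i, (ct h δ (A i) + e i) := ENNReal.tsum_le_tsum fun i => (hs i).le
      _ = _ := ENNReal.tsum_add
      _ ≤ _ := by gcongr

lemma ct_union_le (hg : IsGauge h) {δ : ℝ≥0∞} (A B : Set Z) :
    ct h δ (A ∪ B) ≤ ct h δ A + ct h δ B := by
  rw [union_eq_iUnion]
  refine (ct_iUnion_le hg _).trans ?_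
  simp [tsum_fintype, add_comm]

lemma ct_le_haus (hg : IsGauge h) {δ : ℝ≥0∞} (hδ : 0 < δ) (A : Set Z) :
    ct h δ A ≤ hausdorffM h A := by
  rw [haus_eq hg]
  exact le_iSup₂_of_le δ hδ le_rfl

/-- bound of the measure from contents at scales tending to zero -/
lemma haus_le (hg : IsGauge h) {A : Set Z} {w : ℝ≥0∞} {T : ℕ → ℝ≥0∞} (hT : Tendsto T atTop (𝓝 0))
    (hw : ∀ n, ct h (T n) A ≤ w) : hausdorffM h A ≤ w := by
  rw [haus_eq hg]
  refine iSup₂_le fun r hr => ?_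
  obtain ⟨n, hn⟩ := (hT.eventually (gt_mem_nhds hr)).exists
  exact (ct_anti hn.le A).trans (hw n)

lemma ediam_le_of_tau_lt (hg : IsGauge h) {U : Set Z} {δ : ℝ≥0∞} (hδ : δ ≠ ⊤)
    (hU : Metric.ediam U ≤ δ) {r : ℝ≥0} (hr : tau h U < h r) : Metric.ediam U ≤ r := by
  have h1 : (Metric.ediam U).toNNReal < r := by
    by_contra hcon
    exact absurd (hg.mono (not_lt.1 hcon)) (not_le.2 hr)
  have h2 : Metric.ediam U ≠ ⊤ := ne_top_of_le_ne_top hδ hU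
  rw [← ENNReal.coe_toNNReal h2]
  exact_mod_cast h1.le

lemma haus_eq_zero (hg : IsGauge h) {δ : ℝ≥0∞} (hδ : δ ≠ ⊤) {A : Set Z} (hA : ct h δ A = 0) :
    hausdorffM h A = 0 := by
  rw [haus_eq hg]
  refine le_antisymm (iSup₂_le fun r hr => ?_) bot_le
  obtain ⟨r', hr'0, hr'⟩ := ENNReal.lt_iff_exists_nnreal_btwn.1 hr
  refine (ct_anti hr'.le A).trans ?_
  refine ENNReal.le_of_forall_pos_le_add fun ε hε _ => ?_
  have : ct h δ A < min (ε : ℝ≥0∞) (h r') := by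
    rw [hA]; exact lt_min (by exact_mod_cast hε) (hg.pos _ (by exact_mod_cast hr'0))
  obtain ⟨t, ht, hd, hs⟩ := exists_cover this
  rw [zero_add]
  refine (ct_le_tsum hg t ht fun i => ?_).trans (hs.le.trans (min_le_left _ _))
  exact ediam_le_of_tau_lt hg hδ (hd i)
    ((ENNReal.le_tsum i).trans_lt (hs.trans_le (min_le_right _ _)))

lemma tau_mono_of (hg : IsGauge h) {U : Set Z} {d : ℝ≥0} (hU : Metric.ediam U ≤ d) :
    tau h U ≤ h d := by
  refine hg.mono ?_
  simpa using ENNReal.toNNReal_mono ENNReal.coe_ne_top hU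

/-- fattening -/
lemma exists_open_fat (hg : IsGauge h) {U : Set Z} (hU : Metric.ediam U ≠ ⊤) {η ε : ℝ≥0∞}
    (hη : 0 < η) (hε : 0 < ε) :
    ∃ V, IsOpen V ∧ U ⊆ V ∧ Metric.ediam V ≤ Metric.ediam U + η ∧ tau h V ≤ tau h U + ε := by
  set d := (Metric.ediam U).toNNReal with hd
  have hdU : Metric.ediam U = d := (ENNReal.coe_toNNReal hU).symm
  obtain ⟨e, he0, heη, hhe⟩ : ∃ e : ℝ≥0, 0 < e ∧ (2 * e : ℝ≥0∞) ≤ η ∧ h (d + 2 * e) ≤ h d + ε := by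
    have h1 : Tendsto (fun e : ℝ≥0 => h (d + 2 * e)) (𝓝[>] 0) (𝓝 (h d)) := by
      have : Continuous fun e : ℝ≥0 => h (d + 2 * e) := hg.cont.comp (by fun_prop)
      simpa using (this.tendsto 0).mono_left nhdsWithin_le_nhds
    have h2 : ∀ᶠ e : ℝ≥0 in 𝓝[>] 0, h (d + 2 * e) ≤ h d + ε := by
      by_cases ht : h d = ⊤
      · simp [ht]
      · exact (h1.eventually (gt_mem_nhds (ENNReal.lt_add_right ht hε.ne'))).mono fun _ => le_of_lt
    have h3 : ∀ᶠ e : ℝ≥0 in 𝓝[>] 0, (2 * e : ℝ≥0∞) ≤ η := by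
      have : Tendsto (fun e : ℝ≥0 => (2 * e : ℝ≥0∞)) (𝓝[>] 0) (𝓝 0) := by
        have : Continuous fun e : ℝ≥0 => ((2 * e : ℝ≥0) : ℝ≥0∞) := by fun_prop
        simpa using (this.tendsto 0).mono_left nhdsWithin_le_nhds
      exact (this.eventually (gt_mem_nhds hη)).mono fun _ => le_of_lt
    obtain ⟨e, h4, h5, h6⟩ := (h2.and (h3.and self_mem_nhdsWithin)).exists
    exact ⟨e, h6, h5, h4⟩
  have hdi := Metric.ediam_thickening_le (s := U) e
  refine ⟨Metric.thickening e U, Metric.isOpen_thickening,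
    Metric.self_subset_thickening (by exact_mod_cast he0) _, hdi.trans (by gcongr), ?_⟩
  refine (tau_mono_of hg (d := d + 2 * e) ?_).trans hhe
  rw [hdU] at hdi
  exact_mod_cast hdi

/-- open fattening of a cover -/
lemma exists_open_cover (hg : IsGauge h) {A : Set Z} {δ δ' w : ℝ≥0∞} (hδ : δ < δ')
    (hA : ct h δ A < w) : ∃ t : ℕ → Set Z, A ⊆ (⋃ i, t i) ∧ (∀ i, IsOpen (t i)) ∧
      (∀ i, Metric.ediam (t i) ≤ δ') ∧ ∑' i, tau h (t i) ≤ w := by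
  obtain ⟨t, ht, hd, hs⟩ := exists_cover hA
  have hgap : w - ∑' i, tau h (t i) ≠ 0 := (tsub_pos_of_lt hs).ne'
  obtain ⟨e, he, hes⟩ := ENNReal.exists_pos_sum_of_countable' hgap ℕ
  have h1 : ∀ i, Metric.ediam (t i) ≠ ⊤ := fun i => ne_top_of_lt ((hd i).trans_lt hδ)
  choose V hVo hVs hVd hVt using fun i =>
    exists_open_fat hg (h1 i) (η := δ' - δ) (tsub_pos_of_lt hδ) (he i)
  refine ⟨V, ht.trans (iUnion_mono hVs), hVo, fun i => (hVd i).trans ?_, ?_⟩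
  · calc _ ≤ δ + (δ' - δ) := by gcongr; exact hd i
      _ = δ' := add_tsub_cancel_of_le hδ.le
  · calc _ ≤ ∑' i, (tau h (t i) + e i) := ENNReal.tsum_le_tsum hVt
      _ = _ := ENNReal.tsum_add
      _ ≤ ∑' i, tau h (t i) + (w - ∑' i, tau h (t i)) := by gcongr
      _ = w := add_tsub_cancel_of_le hs.le

end basics
end HausAux


namespace HausAux
section vit
variable {Z : Type*} [MetricSpace Z] {h : ℝ≥0 → ℝ≥0∞}

lemma ct_le_tau (hg : IsGauge h) {δ : ℝ≥0∞} {A : Set Z} (hA : Metric.ediam A ≤ δ) :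
    ct h δ A ≤ tau h A := by
  have := ct_le_tsum hg (ι := Unit) (δ := δ) (A := A) (fun _ => A)
    (fun x hx => mem_iUnion.2 ⟨(), hx⟩) (fun _ => hA)
  simpa using this

def chain (T : ℝ≥0) (x : Z) : Set Z :=
  {y | ∃ u v, edist y u ≤ T ∧ edist u v ≤ T ∧ edist v x ≤ T}

lemma ediam_chain (T : ℝ≥0) (x : Z) : Metric.ediam (chain T x) ≤ 6 * T := by
  have h1 : ∀ y ∈ chain T x, edist y x ≤ 3 * T := by
    rintro y ⟨u, v, h1, h2, h3⟩
    calc edist y x ≤ edist y u + edist u v + edist v x := edist_triangle4 _ _ _ _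
      _ ≤ T + T + T := by gcongr
      _ = 3 * T := by ring
  refine Metric.ediam_le fun y hy z hz => ?_
  calc edist y z ≤ edist y x + edist x z := edist_triangle _ _ _
    _ ≤ 3 * T + 3 * T := by
      gcongr
      · exact h1 y hy
      · rw [edist_comm]; exact h1 z hz
    _ = 6 * T := by ring

structure PP (Z : Type*) [MetricSpace Z] (h : ℝ≥0 → ℝ≥0∞) (C δ0 : ℝ≥0) : Prop where
  gauge : IsGauge h
  pos : 0 < δ0
  fin : h δ0 < ⊤
  bound : ∀ x : Z, ∀ T : ℝ≥0, T ≤ δ0 → ct h (6 * T) (chain T x) ≤ C * h T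

lemma exists_PP (hg : IsGauge h) (halt : FiniteOrder h ∨ FiniteStructuralDim Z ∨
    ∀ x y z : Z, dist x z ≤ max (dist x y) (dist y z)) : ∃ C δ0, PP Z h C δ0 := by
  have hfin : ∃ e : ℝ≥0, 0 < e ∧ h e < ⊤ := by
    have : ∀ᶠ e in 𝓝[>] (0 : ℝ≥0), h e < ⊤ := by
      have h1 := (hg.cont.tendsto 0).mono_left (nhdsWithin_le_nhds (s := Ioi 0))
      rw [hg.zero] at h1
      exact h1.eventually (gt_mem_nhds (by simp))
    obtain ⟨e, he, he'⟩ := (this.and self_mem_nhdsWithin).exists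
    exact ⟨e, he', he⟩
  obtain ⟨e, he0, hef⟩ := hfin
  rcases halt with ha | hb | hc
  · unfold FiniteOrder at ha
    obtain ⟨C, hC1, hC2⟩ := ENNReal.lt_iff_exists_nnreal_btwn.1 ha
    have h1 := eventually_lt_of_limsup_lt hC1
    rw [eventually_nhdsWithin_iff, Metric.eventually_nhds_iff] at h1
    obtain ⟨ε, hε, h1⟩ := h1
    have key : ∀ t : ℝ≥0, (t : ℝ) < ε → t ≤ e → h (3 * t) ≤ C * h t := by
      intro t ht hte
      rcases eq_or_ne t 0 with rfl | h0
      · simp [hg.zero]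
      have ht0 : 0 < t := pos_iff_ne_zero.2 h0
      have := h1 (y := t) (by simpa [NNReal.dist_eq] using ht) ht0
      refine (ENNReal.div_le_iff (hg.pos t ht0).ne' ?_).1 this.le
      exact ((hg.mono hte).trans_lt hef).ne
    refine ⟨C * C, min (e / 3) (⟨ε, hε.le⟩ / 6), hg, ?_, ?_, ?_⟩
    · refine lt_min (by positivity) ?_
      have : (0 : ℝ≥0) < ⟨ε, hε.le⟩ := hε
      exact div_pos this (by norm_num)
    · refine (hg.mono ((min_le_left _ _).trans ?_)).trans_lt hef
      exact NNReal.div_le_of_le_mul (by nlinarith [he0])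
    · intro x T hT
      have hT1 : T ≤ e / 3 := hT.trans (min_le_left _ _)
      have hT2 : (T : ℝ) ≤ ε / 6 := by exact_mod_cast hT.trans (min_le_right _ _)
      have hT1' : (T : ℝ) ≤ e / 3 := by exact_mod_cast hT1
      have he0' : (0 : ℝ) < e := by exact_mod_cast he0
      have k1 := key T (by linarith) (by rw [← NNReal.coe_le_coe]; linarith)
      have k2 := key (3 * T) (by push_cast; linarith)
        (by rw [← NNReal.coe_le_coe]; push_cast; linarith)
      calc _ ≤ tau h (chain T x) := ct_le_tau hg (ediam_chain T x)
        _ ≤ h (6 * T) := tau_mono_of hg (by exact_mod_cast ediam_chain T x)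
        _ ≤ h (3 * (3 * T)) := hg.mono (by
            rw [← NNReal.coe_le_coe]; push_cast; linarith [T.2])
        _ ≤ C * (C * h T) := k2.trans (by gcongr)
        _ = _ := by push_cast; ring
  · obtain ⟨N, δ₀, hδ₀, hN⟩ := hb (1 / 6) (by norm_num)
    refine ⟨N, min e (δ₀ / 6), hg, lt_min he0 (by positivity),
      (hg.mono (min_le_left _ _)).trans_lt hef, ?_⟩
    intro x T hT
    have hT2 : (6 * T : ℝ≥0) ≤ δ₀ := by
      have : (T : ℝ) ≤ δ₀ / 6 := by exact_mod_cast hT.trans (min_le_right _ _)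
      rw [← NNReal.coe_le_coe]; push_cast; linarith
    obtain ⟨U, hU, hUd⟩ := hN (chain T x) ((ediam_chain T x).trans (by exact_mod_cast hT2))
    have hUd' : ∀ i, Metric.ediam (U i) ≤ T := fun i => by
      refine (hUd i).trans ?_
      calc _ ≤ ((1 / 6 : ℝ≥0) : ℝ≥0∞) * (6 * T : ℝ≥0∞) := by
            gcongr; exact ediam_chain T x
        _ = T := by
          rw [← mul_assoc]
          have : ((1 / 6 : ℝ≥0) : ℝ≥0∞) * 6 = ((1 / 6 * 6 : ℝ≥0) : ℝ≥0∞) := by push_cast; rfl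
          rw [this]; norm_num
    refine (ct_le_tsum hg U hU fun i => (hUd' i).trans ?_).trans ?_
    · calc (T : ℝ≥0∞) = 1 * T := by simp
        _ ≤ 6 * T := by gcongr; norm_num
    · rw [tsum_fintype]
      calc _ ≤ ∑ i : Fin N, h T := Finset.sum_le_sum fun i _ => tau_mono_of hg (hUd' i)
        _ = _ := by simp
  · have hc' : ∀ x y z : Z, ∀ T : ℝ≥0, edist x y ≤ T → edist y z ≤ T → edist x z ≤ T := by
      intro x y z T
      simp only [edist_nndist, ENNReal.coe_le_coe, ← NNReal.coe_le_coe, coe_nndist]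
      exact fun a b => (hc x y z).trans (max_le a b)
    refine ⟨1, e, hg, he0, hef, fun x T hT => ?_⟩
    have hd : Metric.ediam (chain T x) ≤ T := by
      have h1 : ∀ y ∈ chain T x, edist y x ≤ T := by
        rintro y ⟨u, v, h1, h2, h3⟩
        exact hc' _ u _ _ h1 (hc' _ v _ _ h2 h3)
      exact Metric.ediam_le fun y hy z hz => hc' _ x _ _ (h1 y hy) (by
        rw [edist_comm]; exact h1 z hz)
    refine (ct_le_tau hg (ediam_chain T x)).trans ((tau_mono_of hg hd).trans (by simp))

lemma exists_max_T (hg : IsGauge h) (δ : ℝ≥0) (w : ℝ≥0∞) :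
    ∃ T ≤ δ, h T ≤ w ∧ ∀ t ≤ δ, h t ≤ w → t ≤ T := by
  have hc : IsCompact {t : ℝ≥0 | t ∈ Icc 0 δ ∧ h t ≤ w} := by
    have : {t : ℝ≥0 | t ∈ Icc 0 δ ∧ h t ≤ w} = Icc 0 δ ∩ h ⁻¹' Iic w := rfl
    rw [this]
    exact isCompact_Icc.inter_right (isClosed_Iic.preimage hg.cont)
  obtain ⟨T, hT, hm⟩ := hc.exists_isGreatest ⟨0, by simp [hg.zero]⟩
  exact ⟨T, hT.1.2, hT.2, fun t ht hw => hm ⟨⟨zero_le, ht⟩, hw⟩⟩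

lemma ediam_le_coe_T {T : ℝ≥0} {δ : ℝ≥0} {w : ℝ≥0∞} (hT : ∀ t ≤ δ, h t ≤ w → t ≤ T)
    {U : Set Z} (hU : Metric.ediam U ≤ δ) (hw : tau h U ≤ w) : Metric.ediam U ≤ T := by
  have h1 := ne_top_of_le_ne_top ENNReal.coe_ne_top hU
  rw [← ENNReal.coe_toNNReal h1] at hU ⊢
  exact_mod_cast hT _ (by exact_mod_cast hU) hw

variable {C δ0 : ℝ≥0}

lemma vitali (hP : PP Z h C δ0) {ι : Type*} [Countable ι] (U : ι → Set Z) (I : Set ι)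
    {δ : ℝ≥0} (hδ : δ ≤ δ0) (hd : ∀ i ∈ I, Metric.ediam (U i) ≤ δ) :
    ∃ J ⊆ I, J.PairwiseDisjoint U ∧
      ct h (6 * δ) (⋃ i ∈ I, U i) ≤ 2 * C * ∑' j : J, tau h (U j) := by
  have hg := hP.gauge
  have hfin : ∀ i ∈ I, tau h (U i) ≠ ⊤ := fun i hi =>
    ((tau_mono_of hg (hd i hi)).trans_lt ((hg.mono hδ).trans_lt hP.fin)).ne
  have hhδ : h δ ≠ ⊤ := ((hg.mono hδ).trans_lt hP.fin).ne
  obtain ⟨J, hJI, hJd, hJ⟩ := Vitali.exists_disjoint_subfamily_covering_enlargement U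
    {i ∈ I | (U i).Nonempty} (fun i => (tau h (U i)).toReal) 2 (by norm_num)
    (fun _ _ => ENNReal.toReal_nonneg) (h δ).toReal
    (fun i hi => ENNReal.toReal_mono hhδ (tau_mono_of hg (hd i hi.1))) (fun i hi => hi.2)
  refine ⟨J, fun j hj => (hJI hj).1, hJd, ?_⟩
  choose T hTδ hTh hTm using fun j : J => exists_max_T hg δ (2 * tau h (U j))
  choose x hx using fun j : J => (hJI j.2).2
  have hsub : (⋃ i ∈ I, U i) ⊆ ⋃ j : J, chain (T j) (x j) := by
    intro y hy
    simp only [mem_iUnion] at hy ⊢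
    obtain ⟨i, hi, hy⟩ := hy
    obtain ⟨j, hj, ⟨z, hzi, hzj⟩, hle⟩ := hJ i ⟨hi, ⟨y, hy⟩⟩
    have hjI := (hJI hj).1
    have hle' : tau h (U i) ≤ 2 * tau h (U j) := by
      rw [← ENNReal.toReal_le_toReal (hfin i hi) (ENNReal.mul_ne_top (by simp) (hfin j hjI))]
      simpa using hle
    refine ⟨⟨j, hj⟩, z, x ⟨j, hj⟩, ?_, ?_, by simp⟩
    · exact (Metric.edist_le_ediam_of_mem hy hzi).trans
        (ediam_le_coe_T (hTm ⟨j, hj⟩) (hd i hi) hle')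
    · refine (Metric.edist_le_ediam_of_mem hzj (hx ⟨j, hj⟩)).trans
        (ediam_le_coe_T (hTm ⟨j, hj⟩) (hd j hjI) ?_)
      rw [two_mul]; exact le_self_add
  calc _ ≤ ct h (6 * δ) (⋃ j : J, chain (T j) (x j)) := ct_mono _ hsub
    _ ≤ ∑' j : J, ct h (6 * δ) (chain (T j) (x j)) := ct_iUnion_le hg _
    _ ≤ ∑' j : J, 2 * C * tau h (U j) := by
      refine ENNReal.tsum_le_tsum fun j => ?_
      calc _ ≤ ct h (6 * T j) (chain (T j) (x j)) := ct_anti (by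
            gcongr; exact_mod_cast hTδ j) _
        _ ≤ C * h (T j) := hP.bound _ _ ((hTδ j).trans hδ)
        _ ≤ C * (2 * tau h (U j)) := by gcongr; exact hTh j
        _ = _ := by ring
    _ = _ := ENNReal.tsum_mul_left

lemma weighted (hP : PP Z h C δ0) {ι : Type*} [Countable ι] (U : ι → Set Z)
    {δ : ℝ≥0} (hδ : δ ≤ δ0) (A : Set Z) (p : ℕ) : ∀ (I : Set ι)
    (_ : ∀ i ∈ I, Metric.ediam (U i) ≤ δ)
    (_ : ∀ x ∈ A, ∃ s : Finset ι, (s : Set ι) ⊆ I ∧ p ≤ s.card ∧ ∀ i ∈ s, x ∈ U i),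
    p * ct h (6 * δ) A ≤ 2 * C * ∑' i : I, tau h (U i) := by
  classical
  induction p with
  | zero => intros; simp
  | succ p ih =>
    intro I hI hA
    obtain ⟨J, hJI, hJd, hJ⟩ := vitali hP U I hδ hI
    have h1 : ct h (6 * δ) A ≤ 2 * C * ∑' j : J, tau h (U j) := by
      refine (ct_mono _ fun x hx => ?_).trans hJ
      obtain ⟨s, hs, hc, hsx⟩ := hA x hx
      obtain ⟨i, hi⟩ : s.Nonempty := Finset.card_pos.1 (by omega)
      exact mem_iUnion₂.2 ⟨i, hs hi, hsx i hi⟩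
    have h2 := ih (I \ J) (fun i hi => hI i hi.1) fun x hx => by
      obtain ⟨s, hs, hc, hsx⟩ := hA x hx
      refine ⟨s.filter (· ∉ J), ?_, ?_, fun i hi => hsx i (Finset.mem_filter.1 hi).1⟩
      · intro i hi
        have := Finset.mem_filter.1 (Finset.mem_coe.1 hi)
        exact ⟨hs this.1, this.2⟩
      · have h3 := Finset.card_filter_add_card_filter_not (s := s) (· ∈ J)
        have h4 : (s.filter (· ∈ J)).card ≤ 1 := by
          refine Finset.card_le_one.2 fun i hi j hj => ?_
          rw [Finset.mem_filter] at hi hj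
          by_contra hne
          exact (Set.disjoint_left.1 (hJd hi.2 hj.2 hne)) (hsx i hi.1) (hsx j hj.1)
        omega
    have h3 : ∑' i : I, tau h (U i) = ∑' j : J, tau h (U j) + ∑' j : ↥(I \ J), tau h (U j) := by
      rw [← ENNReal.summable.tsum_union_disjoint (f := fun i => tau h (U i)) disjoint_sdiff_right ENNReal.summable,
        union_sdiff_cancel hJI]
    rw [h3, mul_add]
    push_cast
    rw [add_mul, one_mul, add_comm]
    gcongr

end vit
end HausAux


namespace HausAux
section slots
variable {Z : Type*} [MetricSpace Z] {h : ℝ≥0 → ℝ≥0∞}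

lemma slots (hg : IsGauge h) (t : ℕ → Set Z) {w0 δ : ℝ≥0∞} (hw0 : w0 ≠ ⊤) (hw00 : w0 ≠ 0)
    (ht : ∑' i, tau h (t i) ≤ w0)
    (hd : ∀ i, Metric.ediam (t i) ≤ δ) :
    ∃ U : ℕ × ℕ → Set Z, (∀ i, tau h (t i) ≠ 0 → ∃ s, t i = U s) ∧
      (∀ s, Metric.ediam (U s) ≤ δ) ∧ (∀ s, tau h (U s) ≤ w0 / 2 ^ s.1) ∧
      (∀ s, (U s).Nonempty → w0 / 2 ^ s.1 ≤ 2 * tau h (U s)) ∧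
      (∀ s, 2 ^ (s.1 + 1) ≤ s.2 → U s = ∅) ∧ ∑' s, tau h (U s) ≤ ∑' i, tau h (t i) := by
  classical
  have hle : ∀ i, tau h (t i) ≤ w0 := fun i => (ENNReal.le_tsum i).trans ht
  have hex : ∀ i, tau h (t i) ≠ 0 → ∃ q : ℕ, w0 / 2 ^ (q + 1) < tau h (t i) := by
    intro i hi
    have h1 : Tendsto (fun n : ℕ => w0 * (2⁻¹ : ℝ≥0∞) ^ (n + 1)) atTop (𝓝 0) := by
      have := (ENNReal.tendsto_pow_atTop_nhds_zero_of_lt_one (r := (2⁻¹ : ℝ≥0∞))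
        ENNReal.one_half_lt_one)
      have := ENNReal.Tendsto.const_mul (a := w0) ((tendsto_add_atTop_iff_nat 1).2 this) (Or.inr hw0)
      simpa using this
    obtain ⟨q, hq⟩ := (h1.eventually (gt_mem_nhds (pos_iff_ne_zero.2 hi))).exists
    exact ⟨q, by rwa [ENNReal.div_eq_inv_mul, mul_comm, ENNReal.inv_pow]⟩
  have hcl : ∀ i, ∃ q : ℕ, tau h (t i) ≠ 0 → w0 / 2 ^ (q + 1) < tau h (t i) ∧
      tau h (t i) ≤ w0 / 2 ^ q := by
    intro i
    by_cases hi : tau h (t i) = 0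
    · exact ⟨0, fun h => absurd hi h⟩
    refine ⟨Nat.find (hex i hi), fun _ => ⟨Nat.find_spec (hex i hi), ?_⟩⟩
    rcases hq : Nat.find (hex i hi) with _ | q
    · simpa using hle i
    · exact not_lt.1 (Nat.find_min (hex i hi) (m := q) (by omega))
  choose cl hcl using hcl
  have htwo : ∀ q : ℕ, w0 / 2 ^ q = 2 * (w0 / 2 ^ (q + 1)) := by
    intro q
    rw [ENNReal.div_eq_inv_mul, ENNReal.div_eq_inv_mul, pow_succ, ENNReal.mul_inv (by simp) (by simp)]
    rw [show 2 * ((2 ^ q)⁻¹ * 2⁻¹ * w0) = (2 * 2⁻¹) * ((2 ^ q)⁻¹ * w0 : ℝ≥0∞) by ring,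
      ENNReal.mul_inv_cancel (by simp) (by simp), one_mul]
  set F : ℕ → Finset ℕ := fun i =>
    (Finset.range i).filter (fun j => tau h (t j) ≠ 0 ∧ cl j = cl i) with hF
  set σ : ℕ → ℕ × ℕ := fun i => (cl i, (F i).card) with hσ
  have hinj : ∀ i j, tau h (t i) ≠ 0 → tau h (t j) ≠ 0 → σ i = σ j → i = j := by
    have key : ∀ i j, tau h (t i) ≠ 0 → σ i = σ j → ¬ i < j := by
      intro i j hi hs hij
      simp only [hσ, Prod.mk.injEq] at hs
      have : (F i).card < (F j).card := by
        refine Finset.card_lt_card ⟨?_, ?_⟩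
        · intro a ha
          simp only [hF, Finset.mem_filter, Finset.mem_range] at ha ⊢
          exact ⟨by omega, ha.2.1, ha.2.2.trans hs.1⟩
        · intro hcon
          have : i ∈ F j := by simp [hF, hij, hi, hs.1]
          have := hcon this
          simp [hF] at this
      omega
    intro i j hi hj hs
    rcases lt_trichotomy i j with h1 | h1 | h1
    · exact absurd h1 (key i j hi hs)
    · exact h1
    · exact absurd h1 (key j i hj hs.symm)
  have hcard : ∀ i, tau h (t i) ≠ 0 → (F i).card < 2 ^ (cl i + 1) := by
    intro i hi
    have h1 : ((insert i (F i)).card : ℝ≥0∞) * (w0 / 2 ^ (cl i + 1)) ≤ w0 := by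
      calc _ = ∑ j ∈ insert i (F i), (w0 / 2 ^ (cl i + 1)) := by simp
        _ ≤ ∑ j ∈ insert i (F i), tau h (t j) := by
          refine Finset.sum_le_sum fun j hj => ?_
          rcases Finset.mem_insert.1 hj with rfl | hj
          · exact (hcl j hi).1.le
          · simp only [hF, Finset.mem_filter] at hj
            rw [← hj.2.2]
            exact (hcl j hj.2.1).1.le
        _ ≤ ∑' j, tau h (t j) := ENNReal.sum_le_tsum _
        _ ≤ w0 := ht
    rw [Finset.card_insert_of_notMem (by simp [hF])] at h1
    by_contra hcon
    have h2 : ((2 : ℝ≥0∞) ^ (cl i + 1)) < (((F i).card + 1 : ℕ) : ℝ≥0∞) := by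
      have : 2 ^ (cl i + 1) < (F i).card + 1 := by omega
      exact_mod_cast this
    have h3 : w0 / 2 ^ (cl i + 1) ≠ 0 := by simp [hw00]
    have h4 : w0 / 2 ^ (cl i + 1) ≠ ⊤ := (ENNReal.div_lt_top hw0 (by simp)).ne
    have h5 := ENNReal.mul_lt_mul_left h3 h4 h2
    rw [ENNReal.mul_div_cancel (by simp) (by simp)] at h5
    exact absurd h1 (not_le.2 h5)
  set S : Set (ℕ × ℕ) := {s | ∃ i, tau h (t i) ≠ 0 ∧ σ i = s} with hS
  have hg' : ∀ s, ∃ i, s ∈ S → tau h (t i) ≠ 0 ∧ σ i = s := by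
    intro s
    by_cases hs : s ∈ S
    · obtain ⟨i, hi⟩ := hs
      exact ⟨i, fun _ => hi⟩
    · exact ⟨0, fun h => absurd h hs⟩
  choose g hgS using hg'
  set U : ℕ × ℕ → Set Z := fun s => if s ∈ S then t (g s) else ∅ with hU
  have hUS : ∀ s ∈ S, U s = t (g s) := fun s hs => by simp [hU, hs]
  have hUn : ∀ s ∉ S, U s = ∅ := fun s hs => by simp [hU, hs]
  refine ⟨U, ?_, ?_, ?_, ?_, ?_, ?_⟩
  · intro i hi
    have hs : σ i ∈ S := ⟨i, hi, rfl⟩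
    refine ⟨σ i, ?_⟩
    rw [hUS _ hs, hinj (g (σ i)) i (hgS _ hs).1 hi (hgS _ hs).2]
  · intro s
    by_cases hs : s ∈ S
    · rw [hUS s hs]; exact hd _
    · simp [hUn s hs]
  · intro s
    by_cases hs : s ∈ S
    · rw [hUS s hs]
      have := (hcl _ (hgS s hs).1).2
      have h2 : cl (g s) = s.1 := congrArg Prod.fst (hgS s hs).2
      rwa [h2] at this
    · simp [hUn s hs, tau_empty hg]
  · intro s hne
    by_cases hs : s ∈ S
    · rw [hUS s hs]
      have := (hcl _ (hgS s hs).1).1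
      have h2 : cl (g s) = s.1 := congrArg Prod.fst (hgS s hs).2
      rw [h2] at this
      rw [htwo]
      gcongr
    · simp [hUn s hs] at hne
  · intro s hle
    refine hUn s fun hs => ?_
    have h1 := hcard _ (hgS s hs).1
    have h2 := (hgS s hs).2
    have h3 : cl (g s) = s.1 := congrArg Prod.fst h2
    have h4 : (F (g s)).card = s.2 := congrArg Prod.snd h2
    rw [h3, h4] at h1
    omega
  · have h1 : ∑' s, tau h (U s) = ∑' s : S, tau h (U s) := by
      refine (tsum_subtype_eq_of_support_subset ?_).symm
      intro s hs
      by_contra hcon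
      exact hs (by simp [hUn s hcon, tau_empty hg])
    rw [h1]
    have h2 : ∀ s : S, tau h (U s) = tau h (t (g s)) := fun s => by rw [hUS s s.2]
    simp_rw [h2]
    refine ENNReal.tsum_comp_le_tsum_of_injective (f := fun s : S => g s) ?_ (fun i => tau h (t i))
    intro a b hab
    ext1
    rw [← (hgS a a.2).2, ← (hgS b b.2).2]
    exact congrArg σ hab

end slots
end HausAux


namespace HausAux
section resid
variable {Z : Type*} [MetricSpace Z] {h : ℝ≥0 → ℝ≥0∞} {C δ0 : ℝ≥0}

/-- the Hausdorff measure as a Borel measure -/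
noncomputable def hm (Z : Type*) [MetricSpace Z] [MeasurableSpace Z] [BorelSpace Z]
    (h : ℝ≥0 → ℝ≥0∞) : Measure Z :=
  Measure.mkMetric (fun d => h d.toNNReal)

lemma hm_apply [MeasurableSpace Z] [BorelSpace Z] (A : Set Z) : hm Z h A = hausdorffM h A := by
  unfold hm hausdorffM
  rw [OuterMeasure.coe_mkMetric]

lemma haus_iUnion_le {A : ℕ → Set Z} (hA : Monotone A) {w : ℝ≥0∞}
    (hw : ∀ n, hausdorffM h (A n) ≤ w) : hausdorffM h (⋃ n, A n) ≤ w := by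
  let _ : MeasurableSpace Z := borel Z
  have : BorelSpace Z := ⟨rfl⟩
  rw [← hm_apply, hA.measure_iUnion]
  exact iSup_le fun n => by rw [hm_apply]; exact hw n

lemma div_pow_anti (w0 : ℝ≥0∞) {a b : ℕ} (hab : a ≤ b) : w0 / 2 ^ b ≤ w0 / 2 ^ a := by
  gcongr
  norm_num

lemma tendsto_div_pow {w0 : ℝ≥0∞} (hw0 : w0 ≠ ⊤) :
    Tendsto (fun n : ℕ => w0 / 2 ^ n) atTop (𝓝 0) := by
  have := (ENNReal.tendsto_pow_atTop_nhds_zero_of_lt_one (r := (2⁻¹ : ℝ≥0∞))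
    ENNReal.one_half_lt_one)
  have := ENNReal.Tendsto.const_mul (a := w0) this (Or.inr hw0)
  simpa [ENNReal.div_eq_inv_mul, mul_comm, ENNReal.inv_pow] using this

lemma exists_T_seq (hg : IsGauge h) (δ : ℝ≥0) {w0 : ℝ≥0∞} (hw0 : w0 ≠ ⊤) :
    ∃ T : ℕ → ℝ≥0, Antitone T ∧ Tendsto T atTop (𝓝 0) ∧ (∀ q, T q ≤ δ) ∧
      (∀ q, h (T q) ≤ w0 / 2 ^ q) ∧
      ∀ q, ∀ U : Set Z, Metric.ediam U ≤ δ → tau h U ≤ w0 / 2 ^ q → Metric.ediam U ≤ T q := by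
  choose T h1 h2 h3 using fun q : ℕ => exists_max_T hg δ (w0 / 2 ^ q)
  refine ⟨T, ?_, ?_, h1, h2, fun q U hU hw => ediam_le_coe_T (h3 q) hU hw⟩
  · intro a b hab
    exact h3 a _ (h1 b) ((h2 b).trans (div_pow_anti w0 hab))
  · rw [tendsto_order]
    refine ⟨fun a ha => by simp at ha, fun e he => ?_⟩
    filter_upwards [(tendsto_div_pow hw0).eventually (gt_mem_nhds (hg.pos e he))] with q hq
    by_contra hcon
    exact absurd (hg.mono (not_lt.1 hcon)) (not_le.2 ((h2 q).trans_lt hq))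

lemma resid_bound (hP : PP Z h C δ0) {δ : ℝ≥0} (hδ : δ ≤ δ0) {w0 : ℝ≥0∞} (hw0 : w0 ≠ ⊤)
    (U : ℕ → ℕ × ℕ → Set Z) (D : ℕ × ℕ → ℝ≥0∞)
    (hd : ∀ n s, Metric.ediam (U n s) ≤ δ) (htau : ∀ n s, tau h (U n s) ≤ w0 / 2 ^ s.1)
    (hemp : ∀ n s, 2 ^ (s.1 + 1) ≤ s.2 → U n s = ∅)
    (hsum : ∀ n, ∑' s, tau h (U n s) ≤ w0) (hDs : ∑' s, D s ≤ w0)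
    (hD : ∀ s, (∀ᶠ n in atTop, (U n s).Nonempty) → w0 / 2 ^ s.1 ≤ 2 * D s)
    (hc : ∀ m s s', (∀ᶠ n in atTop, (U m s ∩ U n s').Nonempty) ∨
      (∀ᶠ n in atTop, U m s ∩ U n s' = ∅))
    (R : Set Z) (hR1 : ∀ x ∈ R, ∀ s, ∀ᶠ n in atTop, x ∉ U n s)
    (hR2 : ∀ x ∈ R, ∀ᶠ n in atTop, ∃ s, x ∈ U n s) :
    hausdorffM h R ≤ 6 * C * w0 := by
  have hg := hP.gauge
  obtain ⟨T, hTa, hT0, hTδ, hTh, hTU⟩ := exists_T_seq (Z := Z) hg δ hw0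
  have hUT : ∀ n s, Metric.ediam (U n s) ≤ T s.1 := fun n s => hTU _ _ (hd n s) (htau n s)
  have hfinlt : ∀ (Q : ℕ) n s, s.1 < Q → (U n s).Nonempty →
      s ∈ Finset.range Q ×ˢ Finset.range (2 ^ Q) := by
    intro Q n s hs hne
    simp only [Finset.mem_product, Finset.mem_range]
    refine ⟨hs, ?_⟩
    by_contra hcon
    rw [hemp n s] at hne
    · exact Set.not_nonempty_empty hne
    · exact (Nat.pow_le_pow_right (by norm_num) (by omega)).trans (not_lt.1 hcon)
  have main : ∀ Q : ℕ, ct h (6 * T Q + ((Q : ℝ≥0∞) + 1)⁻¹) R ≤ 6 * C * w0 := by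
    intro Q
    let meets : ℕ → ℕ × ℕ → ℕ × ℕ → Prop := fun m s s' =>
      Q ≤ s'.1 ∧ s'.1 ≤ s.1 ∧ ∀ᶠ n in atTop, (U m s ∩ U n s').Nonempty
    let W : ℕ × ℕ → Set Z := fun s' => {y | ∃ m s, meets m s s' ∧ y ∈ U m s}
    have hW : ∀ s', ct h (6 * T Q) (W s') ≤ 2 * C * D s' := by
      intro s'
      rcases (W s').eq_empty_or_nonempty with h0 | ⟨y0, m0, s0, hm0, hy0⟩
      · rw [h0]
        refine (ct_le_tau hg (by simp)).trans ?_
        simp [tau_empty hg]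
      have hsub : W s' ⊆ chain (T s'.1) y0 := by
        rintro y ⟨m, s, hm, hy⟩
        obtain ⟨n, ⟨v, hv1, hv2⟩, ⟨u, hu1, hu2⟩⟩ := (hm0.2.2.and hm.2.2).exists
        refine ⟨u, v, ?_, ?_, ?_⟩
        · exact (Metric.edist_le_ediam_of_mem hy hu1).trans
            ((hUT m s).trans (by exact_mod_cast hTa hm.2.1))
        · exact (Metric.edist_le_ediam_of_mem hu2 hv2).trans (hUT n s')
        · exact (Metric.edist_le_ediam_of_mem hv1 hy0).trans
            ((hUT m0 s0).trans (by exact_mod_cast hTa hm0.2.1))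
      calc _ ≤ ct h (6 * T Q) (chain (T s'.1) y0) := ct_mono _ hsub
        _ ≤ ct h (6 * T s'.1) (chain (T s'.1) y0) := ct_anti (by
            gcongr; exact_mod_cast hTa hm0.1) _
        _ ≤ C * h (T s'.1) := hP.bound _ _ ((hTδ _).trans hδ)
        _ ≤ C * (2 * D s') := by
          gcongr
          exact (hTh _).trans (hD s' (hm0.2.2.mono fun n hn => hn.mono inter_subset_right))
        _ = _ := by ring
    have hVQ : ct h (6 * T Q) (⋃ s', W s') ≤ 2 * C * w0 := by
      calc _ ≤ ∑' s', ct h (6 * T Q) (W s') := ct_iUnion_le hg _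
        _ ≤ ∑' s', 2 * C * D s' := ENNReal.tsum_le_tsum hW
        _ = 2 * C * ∑' s', D s' := ENNReal.tsum_mul_left
        _ ≤ _ := by gcongr
    let Rj : ℕ → Set Z := fun j =>
      {x | x ∈ R ∧ x ∉ ⋃ s', W s' ∧ ∀ n ≥ j, ∃ s, Q ≤ s.1 ∧ x ∈ U n s}
    have hRj : ∀ j, hausdorffM h (Rj j) ≤ 4 * C * w0 := by
      intro j
      have key : ∀ Q' : ℕ, Q ≤ Q' → 1 ≤ Q' → ct h (6 * T Q') (Rj j) ≤ 4 * C * w0 := by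
        intro Q' hQQ' hQ'1
        let r : ℕ → ℕ → Prop := fun a b => ∀ s s', Q ≤ s'.1 → s'.1 ≤ s.1 → s.1 < Q' →
          (∀ s'', ¬ meets a s s'') → Disjoint (U a s) (U b s')
        have hr : ∀ a, ∀ᶠ b in atTop, r a b := by
          intro a
          have h1 : ∀ᶠ b in atTop, ∀ s ∈ Finset.range Q' ×ˢ Finset.range (2 ^ Q'),
              ∀ s' ∈ Finset.range Q' ×ˢ Finset.range (2 ^ Q'), Q ≤ s'.1 → s'.1 ≤ s.1 →
              (∀ s'', ¬ meets a s s'') → Disjoint (U a s) (U b s') := by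
            rw [Finset.eventually_all]
            intro s _
            rw [Finset.eventually_all]
            intro s' _
            by_cases hcond : Q ≤ s'.1 ∧ s'.1 ≤ s.1 ∧ (∀ s'', ¬ meets a s s'')
            · rcases hc a s s' with h2 | h2
              · exact absurd ⟨hcond.1, hcond.2.1, h2⟩ (hcond.2.2 s')
              · filter_upwards [h2] with b hb _ _ _
                exact Set.disjoint_iff_inter_eq_empty.2 hb
            · refine Eventually.of_forall fun b h1 h2 h3 => absurd ⟨h1, h2, h3⟩ hcond
          filter_upwards [h1] with b hb s s' h2 h3 h4 h5
          rw [Set.disjoint_iff_inter_eq_empty]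
          by_contra hne
          obtain ⟨y, hy1, hy2⟩ := Set.nonempty_iff_ne_empty.2 hne
          have := hb s (hfinlt Q' a s h4 ⟨y, hy1⟩) s' (hfinlt Q' b s' (by omega) ⟨y, hy2⟩) h2 h3 h5
          exact (Set.disjoint_left.1 this) hy1 hy2
        obtain ⟨f, hf1, hf2⟩ := exists_seq_of_forall_finset_exists (fun n => j ≤ n) r (by
          intro S _
          have h1 : ∀ᶠ b in atTop, ∀ a ∈ S, r a b := by
            rw [Finset.eventually_all]
            exact fun a _ => hr a
          obtain ⟨b, hb1, hb2⟩ := (h1.and (eventually_ge_atTop j)).exists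
          exact ⟨b, hb2, hb1⟩)
        have hw := weighted hP (fun p : Fin (2 * Q') × (ℕ × ℕ) => U (f p.1) p.2)
          ((hTδ Q').trans hδ) (Rj j) Q' {p | Q' ≤ p.2.1} (by
            intro p hp
            exact (hUT _ _).trans (by exact_mod_cast hTa hp)) (by
            classical
            rintro x ⟨hxR, hxV, hx⟩
            choose s hsQ hxs using fun l : Fin (2 * Q') => hx (f l) (hf1 l)
            let G : Finset (Fin (2 * Q')) := Finset.univ.filter fun l => (s l).1 < Q'
            have hGlt : ∀ l ∈ G, ∀ l' ∈ G, l < l' → (s l).1 < (s l').1 := by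
              intro l hl l' hl' hll
              by_contra hcon
              have h1 := hf2 l l' hll (s l) (s l') (hsQ l') (not_lt.1 hcon)
                (Finset.mem_filter.1 hl).2 (fun s'' hs'' =>
                  hxV (mem_iUnion.2 ⟨s'', _, _, hs'', hxs l⟩))
              exact (Set.disjoint_left.1 h1) (hxs l) (hxs l')
            have hGc : G.card ≤ Q' := by
              have := Finset.card_le_card_of_injOn (s := G) (t := Finset.range Q')
                (fun l => (s l).1) (fun l hl => by
                  simpa using (Finset.mem_filter.1 hl).2) (by
                  intro l hl l' hl' hll
                  rcases lt_trichotomy l l' with h1 | h1 | h1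
                  · exact absurd hll (hGlt l hl l' hl' h1).ne
                  · exact h1
                  · exact absurd hll (hGlt l' hl' l hl h1).ne')
              simpa using this
            refine ⟨(Finset.univ \ G).image fun l => (l, s l), ?_, ?_, ?_⟩
            · intro p hp
              simp only [Finset.coe_image, mem_image, Finset.coe_sdiff] at hp
              obtain ⟨l, hl, rfl⟩ := hp
              have := hl.2
              simp only [G, Finset.coe_filter, mem_ofPred_eq, Finset.mem_univ, true_and,
                not_lt] at this
              exact this
            · rw [Finset.card_image_of_injective _ (fun a b hab => (Prod.mk.inj hab).1)]
              have := Finset.card_sdiff_of_subset (Finset.subset_univ G)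
              rw [this]
              simp only [Finset.card_univ, Fintype.card_fin]
              omega
            · intro p hp
              obtain ⟨l, _, rfl⟩ := Finset.mem_image.1 hp
              exact hxs l)
        have hsum2 : ∑' i : {p : Fin (2 * Q') × (ℕ × ℕ) | Q' ≤ p.2.1},
            tau h (U (f i.1.1) i.1.2) ≤ (2 * Q' : ℕ) * w0 := by
          calc _ ≤ ∑' i : Fin (2 * Q') × (ℕ × ℕ), tau h (U (f i.1) i.2) :=
                ENNReal.tsum_comp_le_tsum_of_injective Subtype.val_injective
                  (fun i : Fin (2 * Q') × (ℕ × ℕ) => tau h (U (f i.1) i.2))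
            _ = ∑' l : Fin (2 * Q'), ∑' s, tau h (U (f l) s) :=
                ENNReal.tsum_prod (f := fun (l : Fin (2 * Q')) s => tau h (U (f l) s))
            _ ≤ ∑' l : Fin (2 * Q'), w0 := ENNReal.tsum_le_tsum fun l => hsum _
            _ = _ := by rw [tsum_fintype]; simp
        have hQ0 : (Q' : ℝ≥0∞) ≠ 0 := by exact_mod_cast (by omega : Q' ≠ 0)
        have : (Q' : ℝ≥0∞) * ct h (6 * T Q') (Rj j) ≤ Q' * (4 * C * w0) := by
          refine hw.trans ((mul_le_mul_right hsum2 _).trans (le_of_eq ?_))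
          push_cast; ring
        exact (ENNReal.mul_le_mul_iff_right hQ0 (by simp)).1 this
      refine haus_le hg (T := fun n => 6 * (T (n + (Q + 1)) : ℝ≥0∞)) ?_
        fun n => key _ (by omega) (by omega)
      have h1 : Tendsto (fun n => ((T (n + (Q + 1)) : ℝ≥0) : ℝ≥0∞)) atTop (𝓝 ((0 : ℝ≥0) : ℝ≥0∞)) :=
        ENNReal.tendsto_coe.2 ((tendsto_add_atTop_iff_nat (Q + 1)).2 hT0)
      have := ENNReal.Tendsto.const_mul (a := 6) h1 (Or.inr (by simp))
      simpa using this
    have hRu : R \ (⋃ s', W s') ⊆ ⋃ j, Rj j := by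
      rintro x ⟨hxR, hxV⟩
      have h1 : ∀ᶠ n in atTop, ∀ s ∈ Finset.range Q ×ˢ Finset.range (2 ^ Q), x ∉ U n s := by
        rw [Finset.eventually_all]
        exact fun s _ => hR1 x hxR s
      obtain ⟨j, hj⟩ := eventually_atTop.1 (h1.and (hR2 x hxR))
      refine mem_iUnion.2 ⟨j, hxR, hxV, fun n hn => ?_⟩
      obtain ⟨h2, s, hs⟩ := hj n hn
      refine ⟨s, ?_, hs⟩
      by_contra hcon
      exact h2 s (hfinlt Q n s (not_le.1 hcon) ⟨x, hs⟩) hs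
    have hmono : Monotone Rj := fun a b hab x hx =>
      ⟨hx.1, hx.2.1, fun n hn => hx.2.2 n (hab.trans hn)⟩
    have h4 : hausdorffM h (R \ (⋃ s', W s')) ≤ 4 * C * w0 :=
      (measure_mono hRu).trans (haus_iUnion_le hmono hRj)
    set ρ : ℝ≥0∞ := 6 * T Q + ((Q : ℝ≥0∞) + 1)⁻¹ with hρ
    have hρ0 : 0 < ρ := by
      refine lt_of_lt_of_le ?_ le_add_self
      simp
    calc ct h ρ R ≤ ct h ρ ((⋃ s', W s') ∪ (R \ (⋃ s', W s'))) := ct_mono _ (by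
          rw [union_sdiff_self]; exact subset_union_right)
      _ ≤ ct h ρ (⋃ s', W s') + ct h ρ (R \ (⋃ s', W s')) := ct_union_le hg _ _
      _ ≤ 2 * C * w0 + 4 * C * w0 := by
        gcongr
        · exact (ct_anti le_self_add _).trans hVQ
        · exact (ct_le_haus hg hρ0 _).trans h4
      _ = _ := by ring
  refine haus_le hg ?_ main
  have h1 : Tendsto (fun n => ((T n : ℝ≥0) : ℝ≥0∞)) atTop (𝓝 ((0 : ℝ≥0) : ℝ≥0∞)) :=
    ENNReal.tendsto_coe.2 hT0
  have h2 := ENNReal.Tendsto.const_mul (a := 6) h1 (Or.inr (by simp))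
  have h3 : Tendsto (fun n : ℕ => ((n : ℝ≥0∞) + 1)⁻¹) atTop (𝓝 0) := by
    have := (tendsto_add_atTop_iff_nat 1).2 ENNReal.tendsto_inv_nat_nhds_zero
    simpa using this
  simpa using h2.add h3

end resid
end HausAux


namespace HausAux
section incr
variable {Z : Type*} [MetricSpace Z] {h : ℝ≥0 → ℝ≥0∞} {C δ0 : ℝ≥0}

lemma exists_subseq (W : ℕ → Set Z) (U : ℕ → ℕ × ℕ → Set Z) :
    ∃ φ : ℕ → ℕ, StrictMono φ ∧ (∃ d : ℕ × ℕ → ℝ≥0∞, ∀ s,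
      Tendsto (fun n => Metric.ediam (U (φ n) s)) atTop (𝓝 (d s))) ∧
      ∀ k s, (∀ᶠ n in atTop, (W k ∩ U (φ n) s).Nonempty) ∨
        (∀ᶠ n in atTop, W k ∩ U (φ n) s = ∅) := by
  classical
  let X := (ℕ × (ℕ × ℕ) → Bool) × (ℕ × ℕ → ℝ≥0∞)
  let x : ℕ → X := fun n => (fun p => decide (W p.1 ∩ U n p.2).Nonempty,
    fun s => Metric.ediam (U n s))
  obtain ⟨a, φ, hφ, ha⟩ := CompactSpace.tendsto_subseq x
  refine ⟨φ, hφ, ⟨a.2, fun s => ?_⟩, fun k s => ?_⟩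
  · have h1 : Tendsto (fun n => (x (φ n)).2) atTop (𝓝 a.2) :=
      (continuous_snd.tendsto a).comp ha
    exact (tendsto_pi_nhds.1 h1) s
  · have h1 : Tendsto (fun n => (x (φ n)).1) atTop (𝓝 a.1) :=
      (continuous_fst.tendsto a).comp ha
    have h2 := (tendsto_pi_nhds.1 h1) (k, s)
    rw [nhds_discrete, tendsto_pure] at h2
    rcases hb : a.1 (k, s) with _ | _
    · right
      filter_upwards [h2] with n hn
      rw [hb] at hn
      simpa [x, Set.not_nonempty_iff_eq_empty] using hn
    · left
      filter_upwards [h2] with n hn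
      rw [hb] at hn
      simpa [x] using hn

lemma increasing [TopologicalSpace.SeparableSpace Z] (hP : PP Z h C δ0) {δ : ℝ≥0} (hδ : δ ≤ δ0)
    {w : ℝ≥0∞} (hw : w ≠ ⊤)
    (E : ℕ → Set Z) (hE : Monotone E) (hEw : ∀ n, ct h δ (E n) ≤ w) :
    ∃ R, hausdorffM h R < ⊤ ∧ ct h δ ((⋃ n, E n) \ R) ≤ w := by
  have hg := hP.gauge
  have hsc : SecondCountableTopology Z := UniformSpace.secondCountable_of_separable Z
  have hpos : ∀ n : ℕ, ((n : ℝ≥0∞) + 1)⁻¹ ≠ 0 := fun n => by simp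
  have hle1 : ∀ n : ℕ, ((n : ℝ≥0∞) + 1)⁻¹ ≤ 1 := fun n => by simp
  have hlt : ∀ n : ℕ, ct h δ (E n) < w + ((n : ℝ≥0∞) + 1)⁻¹ := fun n =>
    (hEw n).trans_lt (ENNReal.lt_add_right hw (hpos n))
  choose t ht htd hts using fun n => exists_cover (hlt n)
  set w0 : ℝ≥0∞ := w + 1 with hw0
  have hw0t : w0 ≠ ⊤ := by simp [hw0, hw]
  have hw00 : w0 ≠ 0 := by simp [hw0]
  have hts' : ∀ n, ∑' i, tau h (t n i) ≤ w0 := fun n =>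
    (hts n).le.trans (by rw [hw0]; gcongr; exact hle1 n)
  choose U0 hU1 hU2 hU3 hU4 hU5 hU6 using fun n => slots hg (t n) hw0t hw00 (hts' n) (htd n)
  obtain ⟨B, hBo, hBb⟩ : ∃ B : ℕ → Set Z, (∀ k, IsOpen (B k)) ∧
      ∀ x : Z, ∀ ε : ℝ≥0∞, 0 < ε → ∃ k, x ∈ B k ∧ ∀ y ∈ B k, edist x y < ε := by
    by_cases hZ : Nonempty Z
    · refine ⟨fun k => Metric.eball (TopologicalSpace.denseSeq Z k.unpair.1) ((k.unpair.2 : ℝ≥0∞) + 1)⁻¹,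
        fun k => Metric.isOpen_eball, fun x ε hε => ?_⟩
      obtain ⟨m, hm⟩ := ENNReal.exists_inv_nat_lt (a := ε / 2) (by simpa using hε.ne')
      have hd := TopologicalSpace.denseRange_denseSeq Z
      obtain ⟨k, hk⟩ := hd.exists_mem_open (Metric.isOpen_eball (x := x) (ε := ((m : ℝ≥0∞) + 1)⁻¹))
        ⟨x, Metric.mem_eball_self (by simp)⟩
      rw [Metric.mem_eball] at hk
      have hmm : ((m : ℝ≥0∞) + 1)⁻¹ ≤ ε / 2 :=
        (ENNReal.inv_le_inv.2 le_self_add).trans hm.le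
      refine ⟨Nat.pair k m, ?_, ?_⟩
      · simp only [Nat.unpair_pair, Metric.mem_eball]
        rwa [edist_comm]
      · intro y hy
        simp only [Nat.unpair_pair, Metric.mem_eball] at hy
        calc edist x y ≤ edist x (TopologicalSpace.denseSeq Z k) + edist (TopologicalSpace.denseSeq Z k) y :=
              edist_triangle _ _ _
          _ < ε / 2 + ε / 2 := by
              refine ENNReal.add_lt_add ?_ ?_
              · rw [edist_comm]; exact hk.trans_le hmm
              · rw [edist_comm]; exact hy.trans_le hmm
          _ = ε := ENNReal.add_halves ε
    · exact ⟨fun _ => ∅, fun _ => isOpen_empty, fun x => absurd ⟨x⟩ hZ⟩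
  obtain ⟨e, he⟩ := exists_surjective_nat (ℕ ⊕ (ℕ × (ℕ × ℕ)))
  obtain ⟨φ, hφ, ⟨d, hd⟩, hc⟩ := exists_subseq
    (fun k => Sum.elim B (fun p : ℕ × (ℕ × ℕ) => U0 p.1 p.2) (e k)) U0
  have hcB : ∀ k s, (∀ᶠ n in atTop, (B k ∩ U0 (φ n) s).Nonempty) ∨
        (∀ᶠ n in atTop, B k ∩ U0 (φ n) s = ∅) := by
    intro k s
    obtain ⟨k', hk'⟩ := he (Sum.inl k)
    have := hc k' s
    rwa [hk'] at this
  have hcU : ∀ m s s', (∀ᶠ n in atTop, (U0 m s ∩ U0 (φ n) s').Nonempty) ∨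
        (∀ᶠ n in atTop, U0 m s ∩ U0 (φ n) s' = ∅) := by
    intro m s s'
    obtain ⟨k', hk'⟩ := he (Sum.inr (m, s))
    have := hc k' s'
    rwa [hk'] at this
  have hdδ : ∀ s, d s ≤ δ := fun s => le_of_tendsto (hd s) (Eventually.of_forall fun n => hU2 _ _)
  have hdt : ∀ s, d s ≠ ⊤ := fun s => ne_top_of_le_ne_top ENNReal.coe_ne_top (hdδ s)
  set D : ℕ × ℕ → ℝ≥0∞ := fun s => h (d s).toNNReal with hD
  have hDlim : ∀ s, Tendsto (fun n => tau h (U0 (φ n) s)) atTop (𝓝 (D s)) := fun s =>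
    (hg.cont.tendsto _).comp ((ENNReal.tendsto_toNNReal (hdt s)).comp (hd s))
  have hinv : Tendsto (fun n : ℕ => w + ((φ n : ℝ≥0∞) + 1)⁻¹) atTop (𝓝 w) := by
    have h1 : Tendsto (fun n : ℕ => ((n : ℝ≥0∞) + 1)⁻¹) atTop (𝓝 0) := by
      have := (tendsto_add_atTop_iff_nat 1).2 ENNReal.tendsto_inv_nat_nhds_zero
      simpa using this
    simpa using (h1.comp hφ.tendsto_atTop).const_add w
  have hDsum : ∑' s, D s ≤ w := by
    rw [ENNReal.tsum_eq_iSup_sum]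
    refine iSup_le fun S => ?_
    refine le_of_tendsto_of_tendsto' (tendsto_finsetSum S fun s _ => hDlim s) hinv fun n => ?_
    exact (ENNReal.sum_le_tsum S).trans ((hU6 _).trans (hts _).le)
  let V : ℕ × ℕ → Set Z := fun s => {x | ∀ k, x ∈ B k → ∀ᶠ n in atTop, (B k ∩ U0 (φ n) s).Nonempty}
  have hVd : ∀ s, Metric.ediam (V s) ≤ d s := by
    intro s
    refine Metric.ediam_le fun x hx y hy => ?_
    refine ENNReal.le_of_forall_pos_le_add fun ε hε _ => ?_
    have hε2 : (0 : ℝ≥0∞) < ε / 2 := by simpa using hε.ne'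
    obtain ⟨k, hk, hk'⟩ := hBb x (ε / 2) hε2
    obtain ⟨l, hl, hl'⟩ := hBb y (ε / 2) hε2
    have h1 : ∀ᶠ n in atTop, edist x y ≤ Metric.ediam (U0 (φ n) s) + ε := by
      filter_upwards [hx k hk, hy l hl] with n hn hn'
      obtain ⟨x', hx1, hx2⟩ := hn
      obtain ⟨y', hy1, hy2⟩ := hn'
      calc edist x y ≤ edist x x' + edist x' y' + edist y' y := edist_triangle4 _ _ _ _
        _ ≤ ε / 2 + Metric.ediam (U0 (φ n) s) + ε / 2 := by
          gcongr
          · exact (hk' _ hx1).le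
          · exact Metric.edist_le_ediam_of_mem hx2 hy2
          · rw [edist_comm]; exact (hl' _ hy1).le
        _ = Metric.ediam (U0 (φ n) s) + (ε / 2 + ε / 2) := by ring
        _ = _ := by rw [ENNReal.add_halves]
    exact ge_of_tendsto ((hd s).add_const _) h1
  have hVn : ∀ s x, x ∉ V s → ∀ᶠ n in atTop, x ∉ U0 (φ n) s := by
    intro s x hx
    simp only [V, mem_ofPred_eq, not_forall] at hx
    obtain ⟨k, hk, hk'⟩ := hx
    rcases hcB k s with h1 | h1
    · exact absurd h1 hk'
    · filter_upwards [h1] with n hn hxn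
      have : x ∈ B k ∩ U0 (φ n) s := ⟨hk, hxn⟩
      rw [hn] at this
      exact this
  let Z0 : Set Z := ⋃ p : {p : ℕ × ℕ // tau h (t p.1 p.2) = 0}, t p.1.1 p.1.2
  have hZ0 : hausdorffM h Z0 = 0 := by
    refine haus_eq_zero hg (δ := δ) ENNReal.coe_ne_top ?_
    refine le_antisymm ((ct_le_tsum hg (fun p : {p : ℕ × ℕ // tau h (t p.1 p.2) = 0} =>
      t p.1.1 p.1.2) le_rfl fun p => htd _ _).trans ?_) zero_le
    rw [ENNReal.tsum_eq_zero.2]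
    exact fun p => p.2
  let R : Set Z := (⋃ n, E n) \ (Z0 ∪ ⋃ s, V s)
  have hR := resid_bound hP hδ hw0t (fun n => U0 (φ n)) D (fun n s => hU2 _ _) (fun n s => hU3 _ _)
    (fun n s => hU5 _ _) (fun n => (hU6 _).trans (hts' _)) (hDsum.trans le_self_add)
    (by
      intro s hs
      refine ge_of_tendsto (ENNReal.Tendsto.const_mul (hDlim s) (Or.inr (by simp))) ?_
      filter_upwards [hs] with n hn using hU4 _ _ hn)
    (fun m s s' => hcU (φ m) s s') R
    (by
      rintro x ⟨_, hx⟩ s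
      exact hVn s x fun h1 => hx (Or.inr (mem_iUnion.2 ⟨s, h1⟩)))
    (by
      rintro x ⟨hxE, hx⟩
      obtain ⟨m, hm⟩ := mem_iUnion.1 hxE
      filter_upwards [eventually_ge_atTop m] with n hn
      have h1 : x ∈ E (φ n) := hE (hn.trans (hφ.id_le n)) hm
      obtain ⟨i, hi⟩ := mem_iUnion.1 (ht _ h1)
      have h2 : tau h (t (φ n) i) ≠ 0 := fun h0 =>
        hx (Or.inl (mem_iUnion.2 ⟨⟨(φ n, i), h0⟩, hi⟩))
      obtain ⟨s, hs⟩ := hU1 _ i h2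
      exact ⟨s, hs ▸ hi⟩)
  refine ⟨R ∪ Z0, ?_, ?_⟩
  · refine (measure_union_le _ _).trans_lt ?_
    rw [hZ0, add_zero]
    refine hR.trans_lt ?_
    exact ENNReal.mul_lt_top (by finiteness) hw0t.lt_top
  · have hsub : (⋃ n, E n) \ (R ∪ Z0) ⊆ ⋃ s, V s := by
      rintro x ⟨hxE, hx⟩
      by_contra hcon
      exact hx (Or.inl ⟨hxE, fun h1 => h1.elim (fun h2 => hx (Or.inr h2)) hcon⟩)
    calc _ ≤ ∑' s, tau h (V s) := ct_le_tsum hg V hsub fun s => (hVd s).trans (hdδ s)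
      _ ≤ ∑' s, D s := ENNReal.tsum_le_tsum fun s =>
        hg.mono (ENNReal.toNNReal_mono (hdt s) (hVd s))
      _ ≤ w := hDsum

end incr
end HausAux


namespace HausAux
section choq
variable {Z : Type*} [MetricSpace Z] {h : ℝ≥0 → ℝ≥0∞} {C δ0 : ℝ≥0}

lemma choquet (f : (ℕ → ℕ) → Z) (hf : Continuous f) (Good : Set Z → Prop)
    (hG : ∀ A : ℕ → Set Z, Monotone A → Good (⋃ n, A n) → ∃ n, Good (A n))
    (hr : Good (range f)) :
    ∃ K, IsCompact K ∧ K ⊆ range f ∧ ∀ G, IsOpen G → K ⊆ G → ∃ A ⊆ G, Good A := by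
  let B : (ℕ → ℕ) → ℕ → Set (ℕ → ℕ) := fun σ k => {x | ∀ i < k, x i ≤ σ i}
  have step : ∀ k (σ : ℕ → ℕ), Good (f '' B σ k) → ∃ n, Good (f '' B (Function.update σ k n) (k + 1)) := by
    intro k σ hσ
    refine hG _ ?_ ?_
    · intro a b hab
      refine image_mono fun x hx i hi => (hx i hi).trans ?_
      rcases eq_or_ne i k with rfl | hik
      · simpa using hab
      · simp [Function.update_of_ne hik]
    · rw [← image_iUnion]
      convert hσ using 2
      ext x
      simp only [mem_iUnion, B, mem_ofPred_eq]
      constructor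
      · rintro ⟨n, hn⟩ i hi
        have := hn i (by omega)
        rwa [Function.update_of_ne (by omega)] at this
      · intro hx
        refine ⟨x k, fun i hi => ?_⟩
        rcases eq_or_ne i k with rfl | hik
        · simp
        · rw [Function.update_of_ne hik]; exact hx i (by omega)
  choose nx hnx using step
  let S : (k : ℕ) → {σ : ℕ → ℕ // Good (f '' B σ k)} := fun k =>
    Nat.rec ⟨0, by
      have : B 0 0 = univ := by ext; simp [B]
      rw [this, image_univ]; exact hr⟩
      (fun k σ => ⟨Function.update σ.1 k (nx k σ.1 σ.2), hnx k σ.1 σ.2⟩) k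
  have hS : ∀ k, (S (k + 1)).1 = Function.update (S k).1 k (nx k (S k).1 (S k).2) := fun k => rfl
  let σ : ℕ → ℕ := fun k => (S (k + 1)).1 k
  have hσ : ∀ k i, i < k → (S k).1 i = σ i := by
    intro k
    induction k with
    | zero => intro i hi; omega
    | succ k ih =>
      intro i hi
      rcases eq_or_ne i k with rfl | hik
      · rfl
      · rw [hS, Function.update_of_ne hik]; exact ih i (by omega)
  have hgood : ∀ k, Good (f '' B σ k) := by
    intro k
    have : B σ k = B (S k).1 k := by
      ext x
      simp only [B, mem_ofPred_eq]
      exact forall₂_congr fun i hi => by rw [hσ k i hi]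
    rw [this]; exact (S k).2
  have hbox : IsCompact (Set.pi univ fun i => Iic (σ i)) := isCompact_univ_pi fun i =>
    (Set.finite_Iic _).isCompact
  refine ⟨f '' (Set.pi univ fun i => Iic (σ i)), hbox.image hf, image_subset_range _ _, ?_⟩
  intro G hGo hKG
  by_contra hcon
  push Not at hcon
  have h1 : ∀ k, ∃ x ∈ B σ k, f x ∉ G := by
    intro k
    by_contra h2
    push Not at h2
    exact hcon _ (image_subset_iff.2 h2) (hgood k)
  choose x hxB hxG using h1
  obtain ⟨y, hy, φ, hφ, hlim⟩ := hbox.tendsto_subseq (x := fun k i => min (x k i) (σ i))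
    (fun k i _ => mem_Iic.2 (min_le_right _ _))
  have hlim2 : Tendsto (fun k => x (φ k)) atTop (𝓝 y) := by
    rw [tendsto_pi_nhds] at hlim ⊢
    intro i
    refine (hlim i).congr' ?_
    filter_upwards [eventually_gt_atTop i] with k hk
    exact min_eq_left (hxB (φ k) i (hk.trans_le (hφ.id_le k)))
  have h2 : ∀ᶠ k in atTop, f (x (φ k)) ∈ G :=
    ((hf.tendsto y).comp hlim2).eventually (hGo.mem_nhds (hKG ⟨y, hy, rfl⟩))
  obtain ⟨k, hk⟩ := h2.exists
  exact hxG _ hk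

def SF (h : ℝ≥0 → ℝ≥0∞) (A : Set Z) : Prop :=
  ∃ R : ℕ → Set Z, (∀ n, hausdorffM h (R n) < ⊤) ∧ A ⊆ ⋃ n, R n

lemma SF.mono {A B : Set Z} (hB : SF h B) (hAB : A ⊆ B) : SF h A := by
  obtain ⟨R, h1, h2⟩ := hB
  exact ⟨R, h1, hAB.trans h2⟩

lemma SF.iUnion {A : ℕ → Set Z} (hA : ∀ n, SF h (A n)) : SF h (⋃ n, A n) := by
  choose R h1 h2 using hA
  refine ⟨fun k => R k.unpair.1 k.unpair.2, fun k => h1 _ _, iUnion_subset fun n => (h2 n).trans ?_⟩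
  refine iUnion_subset fun m x hx => mem_iUnion.2 ⟨Nat.pair n m, by simpa using hx⟩

lemma SF.of_lt {A : Set Z} (hA : hausdorffM h A < ⊤) : SF h A :=
  ⟨fun _ => A, fun _ => hA, fun x hx => mem_iUnion.2 ⟨0, hx⟩⟩

lemma SF.union {A B : Set Z} (hA : SF h A) (hB : SF h B) : SF h (A ∪ B) := by
  have := SF.iUnion (A := fun n => if n = 0 then A else B) (h := h) (fun n => by
    by_cases hn : n = 0 <;> simp [hn, hA, hB])
  refine this.mono ?_
  rintro x (hx | hx)
  · exact mem_iUnion.2 ⟨0, by simpa using hx⟩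
  · exact mem_iUnion.2 ⟨1, by simpa using hx⟩

lemma compact_of_not_SF [TopologicalSpace.SeparableSpace Z] (hP : PP Z h C δ0) {N : Set Z}
    (hN : AnalyticSet N) (hSF : ¬ SF h N) :
    ∃ K ⊆ N, IsCompact K ∧ 0 < hausdorffM h K := by
  have hg := hP.gauge
  obtain ⟨n, hn⟩ : ∃ n : ℕ, ¬ ∃ R, SF h R ∧ ct h δ0 (N \ R) ≤ ((n : ℝ≥0∞) + 1)⁻¹ := by
    by_contra hcon
    push Not at hcon
    choose R hR1 hR2 using hcon
    apply hSF
    have h1 : ct h δ0 (N \ ⋃ n, R n) = 0 := by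
      have h1 : Tendsto (fun n : ℕ => ((n : ℝ≥0∞) + 1)⁻¹) atTop (𝓝 0) := by
        have := (tendsto_add_atTop_iff_nat 1).2 ENNReal.tendsto_inv_nat_nhds_zero
        simpa using this
      refine le_antisymm (ge_of_tendsto' h1 fun n => ?_) zero_le
      exact (ct_mono _ (sdiff_subset_sdiff_right (subset_iUnion R n))).trans (hR2 n)
    have h2 := haus_eq_zero hg ENNReal.coe_ne_top h1
    refine ((SF.of_lt (h := h) (by rw [h2]; simp)).union (SF.iUnion hR1)).mono ?_
    exact fun x hx => by
      by_cases hxR : x ∈ ⋃ n, R n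
      · exact Or.inr hxR
      · exact Or.inl ⟨hx, hxR⟩
  set c : ℝ≥0∞ := ((n : ℝ≥0∞) + 1)⁻¹ with hc
  have hc0 : 0 < c := by simp [hc]
  have hct : c ≠ ⊤ := by simp [hc]
  rw [AnalyticSet] at hN
  rcases hN with rfl | ⟨f, hf, rfl⟩
  · exact absurd ⟨fun _ => ∅, by simp, by simp⟩ hSF
  obtain ⟨K, hK, hKr, hKG⟩ := choquet f hf (fun A => ¬ ∃ R, SF h R ∧ ct h δ0 (A \ R) ≤ c)
    (by
      intro A hA hgood
      by_contra hcon
      push Not at hcon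
      choose R hR1 hR2 using hcon
      apply hgood
      obtain ⟨R', hR', hR''⟩ := increasing hP le_rfl hct (fun n => A n \ ⋃ n, R n)
        (fun a b hab => sdiff_subset_sdiff_left (hA hab)) (fun n =>
          (ct_mono _ (sdiff_subset_sdiff_right (subset_iUnion R n))).trans (hR2 n))
      refine ⟨(⋃ n, R n) ∪ R', (SF.iUnion hR1).union (SF.of_lt hR'), ?_⟩
      rwa [← iUnion_sdiff, sdiff_sdiff] at hR'') hn
  refine ⟨K, hKr, hK, pos_iff_ne_zero.2 fun h0 => ?_⟩
  have hδ0 : (0 : ℝ≥0∞) < δ0 := by exact_mod_cast hP.pos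
  have h1 : ct h ((δ0 : ℝ≥0∞) / 2) K < c := by
    refine lt_of_le_of_lt (ct_le_haus hg ?_ K) (by rwa [h0])
    exact ENNReal.half_pos hδ0.ne'
  obtain ⟨t, ht1, ht2, ht3, ht4⟩ := exists_open_cover hg (ENNReal.half_lt_self hδ0.ne' (by simp)) h1
  obtain ⟨A, hA, hA2⟩ := hKG _ (isOpen_iUnion ht2) ht1
  refine hA2 ⟨∅, ⟨fun _ => ∅, by simp, by simp⟩, ?_⟩
  rw [sdiff_empty]
  exact (ct_le_tsum hg t hA ht3).trans ht4

lemma compact_of_SF {N : Set Z}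
    (hN : AnalyticSet N) (hSF : SF h N) (hpos : 0 < hausdorffM h N) :
    ∃ K ⊆ N, IsCompact K ∧ 0 < hausdorffM h K := by
  let _ : MeasurableSpace Z := borel Z
  have : BorelSpace Z := ⟨rfl⟩
  obtain ⟨R, hR, hNR⟩ := hSF
  obtain ⟨n, hn⟩ : ∃ n, 0 < hausdorffM h (N ∩ R n) := by
    by_contra hcon
    push Not at hcon
    have h1 : hausdorffM h (⋃ n, N ∩ R n) = 0 :=
      measure_iUnion_null fun n => le_antisymm (hcon n) zero_le
    rw [← inter_iUnion, inter_eq_left.2 hNR] at h1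
    exact hpos.ne' h1
  set M := toMeasurable (hm Z h) (N ∩ R n) with hM
  have hMm : MeasurableSet M := measurableSet_toMeasurable _ _
  have hMf : hm Z h M < ⊤ := by
    rw [hM, measure_toMeasurable, hm_apply]
    exact (measure_mono inter_subset_right).trans_lt (hR n)
  set μ := (hm Z h).restrict M with hμ
  have hfin : IsFiniteMeasure μ := ⟨by rw [hμ, Measure.restrict_apply_univ]; exact hMf⟩
  have hμN : 0 < μ N := by
    rw [hμ, Measure.restrict_apply' hMm]
    refine lt_of_lt_of_le hn ?_
    rw [← hm_apply]
    exact measure_mono fun x hx => ⟨hx.1, subset_toMeasurable _ _ hx⟩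
  rw [AnalyticSet] at hN
  rcases hN with rfl | ⟨f, hf, rfl⟩
  · simp at hpos
  obtain ⟨K, hK, hKr, hKG⟩ := choquet f hf (fun A => μ (range f) / 2 < μ A)
    (by
      intro A hA hgood
      rw [hA.measure_iUnion] at hgood
      exact lt_iSup_iff.1 hgood) (ENNReal.half_lt_self hμN.ne' (measure_ne_top _ _))
  refine ⟨K, hKr, hK, ?_⟩
  have h1 : μ (range f) / 2 ≤ μ K := by
    rw [K.measure_eq_iInf_isOpen μ]
    refine le_iInf fun G => le_iInf fun hKG' => le_iInf fun hGo => ?_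
    obtain ⟨A, hA, hA2⟩ := hKG G hGo hKG'
    exact hA2.le.trans (measure_mono hA)
  rw [← hm_apply]
  calc 0 < μ (range f) / 2 := ENNReal.half_pos hμN.ne'
    _ ≤ μ K := h1
    _ ≤ _ := Measure.restrict_apply_le _ _

lemma compact_of_analytic [TopologicalSpace.SeparableSpace Z] (hP : PP Z h C δ0) {N : Set Z}
    (hN : AnalyticSet N) (hpos : 0 < hausdorffM h N) :
    ∃ K ⊆ N, IsCompact K ∧ 0 < hausdorffM h K := by
  by_cases hSF : SF h N
  · exact compact_of_SF hN hSF hpos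
  · exact compact_of_not_SF hP hN hSF

end choq
end HausAux

open scoped CompactlySupported

namespace HausAux
section frost
variable {Z : Type*} [MetricSpace Z] {h : ℝ≥0 → ℝ≥0∞} {C δ0 : ℝ≥0}

lemma wfam (hP : PP Z h C δ0) {ι : Type} [Fintype ι] (U : ι → Set Z) (c : ι → ℝ≥0) (A : Set Z)
    (hd : ∀ i, Metric.ediam (U i) ≤ δ0)
    (hA : ∀ x ∈ A, (1 : ℝ) ≤ ∑ i, (U i).indicator (fun _ => (c i : ℝ)) x) :
    ct h (6 * δ0) A ≤ 2 * C * ∑ i, c i * tau h (U i) := by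
  classical
  have hg := hP.gauge
  have htf : ∀ i, tau h (U i) ≠ ⊤ := fun i => ((tau_mono_of hg (hd i)).trans_lt hP.fin).ne
  set S := ∑ i, c i * tau h (U i) with hS
  set B := ∑ i, tau h (U i) with hB
  have hBf : B ≠ ⊤ := by rw [hB]; exact ENNReal.sum_ne_top.2 fun i _ => htf i
  have key : ∀ p : ℕ, p * ct h (6 * δ0) A ≤ p * (2 * C * S) + 2 * C * B := by
    intro p
    have h1 := weighted hP (fun q : (Σ i : ι, Fin ⌈(p : ℝ) * c i⌉₊) => U q.1) le_rfl A p univ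
      (fun q _ => hd _) (by
        intro x hx
        refine ⟨(Finset.univ.filter fun i => x ∈ U i).sigma fun i => Finset.univ, by simp, ?_, ?_⟩
        · rw [Finset.card_sigma]
          have h2 := hA x hx
          have h3 : ∑ i, (U i).indicator (fun _ => (c i : ℝ)) x
              = ∑ i ∈ Finset.univ.filter (fun i => x ∈ U i), (c i : ℝ) := by
            rw [Finset.sum_filter]
            simp [Set.indicator_apply]
          rw [h3] at h2
          have h4 : (p : ℝ) ≤ ∑ i ∈ Finset.univ.filter (fun i => x ∈ U i), (⌈(p : ℝ) * c i⌉₊ : ℝ) := by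
            calc (p : ℝ) = p * 1 := by ring
              _ ≤ p * ∑ i ∈ Finset.univ.filter (fun i => x ∈ U i), (c i : ℝ) := by gcongr
              _ = ∑ i ∈ Finset.univ.filter (fun i => x ∈ U i), p * (c i : ℝ) := Finset.mul_sum _ _ _
              _ ≤ _ := Finset.sum_le_sum fun i _ => Nat.le_ceil _
          simp only [Finset.card_univ, Fintype.card_fin]
          exact_mod_cast h4
        · intro q hq
          simp only [Finset.mem_sigma, Finset.mem_filter] at hq
          exact hq.1.2)
    refine h1.trans ?_
    have h2 : ∑' q : (univ : Set (Σ i : ι, Fin ⌈(p : ℝ) * c i⌉₊)), tau h (U q.1.1)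
        = ∑ i, (⌈(p : ℝ) * c i⌉₊ : ℝ≥0∞) * tau h (U i) := by
      rw [tsum_univ (fun q : (Σ i : ι, Fin ⌈(p : ℝ) * c i⌉₊) => tau h (U q.1)), tsum_fintype,
        Fintype.sum_sigma]
      simp
    rw [h2]
    have h3 : ∀ i, (⌈(p : ℝ) * c i⌉₊ : ℝ≥0∞) ≤ p * c i + 1 := by
      intro i
      have := (Nat.ceil_lt_add_one (a := (p : ℝ) * c i) (by positivity)).le
      have h4 : ((⌈(p : ℝ) * c i⌉₊ : ℝ≥0)) ≤ p * c i + 1 := by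
        rw [← NNReal.coe_le_coe]; push_cast; exact this
      exact_mod_cast h4
    calc _ ≤ 2 * C * ∑ i, (p * c i + 1) * tau h (U i) := by gcongr with i _; exact h3 i
      _ = 2 * C * (p * S + B) := by
        congr 1
        rw [hS, Finset.mul_sum, hB, ← Finset.sum_add_distrib]
        exact Finset.sum_congr rfl fun i _ => by ring
      _ = _ := by ring
  have key2 : ∀ p : ℕ, ct h (6 * δ0) A ≤ 2 * C * S + 2 * C * B * ((p : ℝ≥0∞) + 1)⁻¹ := by
    intro p
    have h1 := key (p + 1)
    have hp0 : ((p + 1 : ℕ) : ℝ≥0∞) ≠ 0 := by exact_mod_cast Nat.succ_ne_zero p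
    have hpt : ((p + 1 : ℕ) : ℝ≥0∞) ≠ ⊤ := ENNReal.natCast_ne_top _
    refine (ENNReal.mul_le_mul_iff_right hp0 hpt).1 (h1.trans (le_of_eq ?_))
    rw [mul_add]
    congr 1
    have : ((p + 1 : ℕ) : ℝ≥0∞) * ((p : ℝ≥0∞) + 1)⁻¹ = 1 := by
      rw [show ((p : ℝ≥0∞) + 1) = ((p + 1 : ℕ) : ℝ≥0∞) by push_cast; rfl]
      exact ENNReal.mul_inv_cancel hp0 hpt
    calc 2 * C * B = 2 * C * B * (((p + 1 : ℕ) : ℝ≥0∞) * ((p : ℝ≥0∞) + 1)⁻¹) := by rw [this, mul_one]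
      _ = _ := by ring
  have h1 : Tendsto (fun n : ℕ => ((n : ℝ≥0∞) + 1)⁻¹) atTop (𝓝 0) := by
    have := (tendsto_add_atTop_iff_nat 1).2 ENNReal.tendsto_inv_nat_nhds_zero
    simpa using this
  have h2 := (ENNReal.Tendsto.const_mul (a := 2 * C * B) h1
    (Or.inr (by finiteness))).const_add (2 * C * S)
  simp only [mul_zero, add_zero] at h2
  exact ge_of_tendsto' h2 key2

/-- the weighted functional -/
def Sf (h : ℝ≥0 → ℝ≥0∞) (δ0 : ℝ≥0) (K : Set Z) (f : C(K, ℝ)) : Set ℝ :=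
  {r | ∃ (ι : Type) (_ : Fintype ι) (U : ι → Set Z) (c : ι → ℝ≥0),
    (∀ i, Metric.ediam (U i) ≤ δ0) ∧
    (∀ x : K, f x ≤ ∑ i, (U i).indicator (fun _ => (c i : ℝ)) (x : Z)) ∧
    r = ∑ i, (c i : ℝ) * (tau h (U i)).toReal}

lemma Sf_nonneg {K : Set Z} {f : C(K, ℝ)} {r : ℝ} (hr : r ∈ Sf h δ0 K f) : 0 ≤ r := by
  obtain ⟨ι, _, U, c, _, _, rfl⟩ := hr
  positivity

lemma Sf_nonempty (hpos : 0 < δ0) {K : Set Z} (hK : IsCompact K) (f : C(K, ℝ)) :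
    (Sf h δ0 K f).Nonempty := by
  have : CompactSpace K := isCompact_iff_compactSpace.mp hK
  obtain ⟨t, htK, htf, ht⟩ := hK.finite_cover_balls (e := (δ0 : ℝ) / 2) (by positivity)
  obtain ⟨n, e, he⟩ : ∃ (n : ℕ) (e : Fin n → Z), range e = t := by
    have := htf.fintype
    exact ⟨_, fun i => ((Fintype.equivFin t).symm i : Z), by
      ext x; simp only [mem_range]
      constructor
      · rintro ⟨i, rfl⟩; exact Subtype.mem _
      · intro hx; exact ⟨Fintype.equivFin t ⟨x, hx⟩, by simp⟩⟩
  refine ⟨_, Fin n, inferInstance, fun i => Metric.ball (e i) (δ0 / 2), fun _ => ‖f‖₊, ?_, ?_, rfl⟩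
  · intro i
    refine (Metric.ediam_le_of_forall_dist_le (C := δ0) fun x hx y hy => ?_).trans (by simp)
    rw [Metric.mem_ball] at hx hy
    rw [dist_comm] at hy
    linarith [dist_triangle x (e i) y]
  · intro x
    obtain ⟨y, hy, hxy⟩ := mem_iUnion₂.1 (ht x.2)
    rw [← he] at hy
    obtain ⟨i, rfl⟩ := hy
    have h1 : f x ≤ ‖f‖ := (le_abs_self _).trans (f.norm_coe_le_norm x)
    refine h1.trans ?_
    have := Finset.single_le_sum (f := fun i => (Metric.ball (e i) ((δ0 : ℝ) / 2)).indicator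
      (fun _ => ((‖f‖₊ : ℝ≥0) : ℝ)) (x : Z)) (fun j _ => Set.indicator_nonneg (by simp) _)
      (Finset.mem_univ i)
    refine le_trans (le_of_eq ?_) this
    rw [Set.indicator_of_mem hxy]
    simp

noncomputable def pf (h : ℝ≥0 → ℝ≥0∞) (δ0 : ℝ≥0) (K : Set Z) (f : C(K, ℝ)) : ℝ := sInf (Sf h δ0 K f)

lemma Sf_bdd {K : Set Z} {f : C(K, ℝ)} : BddBelow (Sf h δ0 K f) := ⟨0, fun _ hr => Sf_nonneg hr⟩

lemma pf_nonneg {K : Set Z} {f : C(K, ℝ)} : 0 ≤ pf h δ0 K f :=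
  Real.sInf_nonneg fun _ hr => Sf_nonneg hr

lemma Sf_add {K : Set Z} {f g : C(K, ℝ)} {r s : ℝ} (hr : r ∈ Sf h δ0 K f) (hs : s ∈ Sf h δ0 K g) :
    r + s ∈ Sf h δ0 K (f + g) := by
  obtain ⟨ι, _, U, c, h1, h2, rfl⟩ := hr
  obtain ⟨ι', _, U', c', h1', h2', rfl⟩ := hs
  refine ⟨ι ⊕ ι', inferInstance, Sum.elim U U', Sum.elim c c', ?_, ?_, ?_⟩
  · rintro (i | i)
    · exact h1 i
    · exact h1' i
  · intro x
    rw [Fintype.sum_sum_type]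
    exact add_le_add (h2 x) (h2' x)
  · rw [Fintype.sum_sum_type]; rfl

lemma Sf_smul {K : Set Z} {f : C(K, ℝ)} {r : ℝ} (hr : r ∈ Sf h δ0 K f) {a : ℝ} (ha : 0 ≤ a) :
    a * r ∈ Sf h δ0 K (a • f) := by
  obtain ⟨ι, _, U, c, h1, h2, rfl⟩ := hr
  lift a to ℝ≥0 using ha
  refine ⟨ι, inferInstance, U, fun i => a * c i, h1, ?_, ?_⟩
  · intro x
    have := mul_le_mul_of_nonneg_left (h2 x) a.2
    refine this.trans (le_of_eq ?_)
    rw [Finset.mul_sum]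
    refine Finset.sum_congr rfl fun i _ => ?_
    by_cases hx : (x : Z) ∈ U i <;> simp [hx]
  · rw [Finset.mul_sum]
    refine Finset.sum_congr rfl fun i _ => ?_
    push_cast; ring

lemma pf_add (hpos : 0 < δ0) {K : Set Z} (hK : IsCompact K) (f g : C(K, ℝ)) :
    pf h δ0 K (f + g) ≤ pf h δ0 K f + pf h δ0 K g := by
  refine le_of_forall_pos_le_add fun ε hε => ?_
  obtain ⟨r, hr, hr'⟩ := Real.lt_sInf_add_pos (Sf_nonempty (h := h) hpos hK f) (half_pos hε)
  obtain ⟨s, hs, hs'⟩ := Real.lt_sInf_add_pos (Sf_nonempty (h := h) hpos hK g) (half_pos hε)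
  have := csInf_le Sf_bdd (Sf_add hr hs)
  unfold pf
  linarith

lemma pf_smul (hpos : 0 < δ0) {K : Set Z} (hK : IsCompact K) (a : ℝ) (ha : 0 < a) (f : C(K, ℝ)) :
    pf h δ0 K (a • f) = a * pf h δ0 K f := by
  have key : ∀ (a : ℝ) (_ : 0 < a) (f : C(K, ℝ)), pf h δ0 K (a • f) ≤ a * pf h δ0 K f := by
    intro a ha f
    refine le_of_forall_pos_le_add fun ε hε => ?_
    obtain ⟨r, hr, hr'⟩ := Real.lt_sInf_add_pos (Sf_nonempty (h := h) hpos hK f) (div_pos hε ha)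
    have := csInf_le Sf_bdd (Sf_smul hr ha.le)
    unfold pf
    have h2 : a * r ≤ a * (sInf (Sf h δ0 K f) + ε / a) := by gcongr
    rw [mul_add, mul_div_cancel₀ _ ha.ne'] at h2
    linarith
  refine le_antisymm (key a ha f) ?_
  have := key a⁻¹ (inv_pos.2 ha) (a • f)
  rw [smul_smul, inv_mul_cancel₀ ha.ne', one_smul] at this
  calc _ ≤ a * (a⁻¹ * pf h δ0 K (a • f)) := by gcongr
    _ = _ := by rw [← mul_assoc, mul_inv_cancel₀ ha.ne', one_mul]

lemma pf_one_pos (hP : PP Z h C δ0) {K : Set Z} (hK : IsCompact K) (hKp : 0 < hausdorffM h K) :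
    0 < pf h δ0 K 1 := by
  have hg := hP.gauge
  have hctp : ct h (6 * δ0) K ≠ 0 := fun h0 => hKp.ne' (haus_eq_zero hg (by finiteness) h0)
  have hfam : ∀ r ∈ Sf h δ0 K 1, ct h (6 * δ0) K ≤ 2 * C * ENNReal.ofReal r := by
    rintro r ⟨ι, _, U, c, h1, h2, rfl⟩
    have h3 := wfam hP U c K h1 (fun x hx => h2 ⟨x, hx⟩)
    refine h3.trans (le_of_eq ?_)
    congr 1
    rw [ENNReal.ofReal_sum_of_nonneg (fun i _ => by positivity)]
    refine Finset.sum_congr rfl fun i _ => ?_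
    rw [ENNReal.ofReal_mul (by positivity), ENNReal.ofReal_coe_nnreal, ENNReal.ofReal_toReal]
    exact ((tau_mono_of hg (h1 i)).trans_lt hP.fin).ne
  have hCpos : (0 : ℝ) < C := by
    obtain ⟨r, hr⟩ := Sf_nonempty (h := h) hP.pos hK 1
    have h1 := hfam r hr
    rcases eq_or_ne C 0 with h0 | h0
    · simp [h0] at h1
      exact absurd h1 hctp
    · exact_mod_cast pos_iff_ne_zero.2 h0
  have hctf : ct h (6 * δ0) K ≠ ⊤ := by
    obtain ⟨r, hr⟩ := Sf_nonempty (h := h) hP.pos hK 1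
    exact ne_top_of_le_ne_top (by finiteness) (hfam r hr)
  have h1 : (ct h (6 * δ0) K).toReal / (2 * C) ≤ pf h δ0 K 1 := by
    refine le_csInf (Sf_nonempty hP.pos hK 1) fun r hr => ?_
    rw [div_le_iff₀ (by positivity)]
    have h2 := ENNReal.toReal_mono (by finiteness) (hfam r hr)
    rw [ENNReal.toReal_mul, ENNReal.toReal_ofReal (Sf_nonneg hr)] at h2
    simp at h2
    linarith
  refine lt_of_lt_of_le ?_ h1
  have := ENNReal.toReal_pos hctp hctf
  positivity

lemma frostman (hP : PP Z h C δ0) [MeasurableSpace Z] [BorelSpace Z] {K : Set Z} (hK : IsCompact K)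
    (hKp : 0 < hausdorffM h K) :
    ∃ ν : Measure Z, IsFiniteMeasure ν ∧ ν Kᶜ = 0 ∧ 0 < ν univ ∧
      ∀ A, Metric.ediam A < δ0 → ν A ≤ tau h A := by
  have hg := hP.gauge
  have hcs : CompactSpace K := isCompact_iff_compactSpace.mp hK
  have hne : K.Nonempty := by
    rw [nonempty_iff_ne_empty]; rintro rfl; simp at hKp
  obtain ⟨x0, hx0⟩ := hne
  have hp1 := pf_one_pos hP hK hKp
  let f0 : C(K, ℝ) →ₗ.[ℝ] ℝ := LinearPMap.mkSpanSingleton' (1 : C(K, ℝ)) (pf h δ0 K 1) (by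
    intro c hc
    have := congrArg (fun f : C(K, ℝ) => f ⟨x0, hx0⟩) hc
    have hc0 : c = 0 := by simpa using this
    simp [hc0])
  obtain ⟨g, hg1, hg2⟩ := exists_extension_of_le_sublinear f0 (pf h δ0 K)
    (fun c hc f => pf_smul hP.pos hK c hc f) (fun f g => pf_add hP.pos hK f g) (by
      rintro ⟨y, hy⟩
      have hy2 : y ∈ Submodule.span ℝ {(1 : C(K, ℝ))} := hy
      obtain ⟨c, rfl⟩ := Submodule.mem_span_singleton.1 hy2
      have h1 : f0 ⟨c • 1, hy⟩ = c * pf h δ0 K 1 :=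
        LinearPMap.mkSpanSingleton'_apply _ _ _ c hy
      rw [h1]
      rcases lt_or_ge 0 c with hc | hc
      · exact (pf_smul hP.pos hK c hc 1).ge
      · exact (mul_nonpos_of_nonpos_of_nonneg hc hp1.le).trans pf_nonneg)
  have hgone : g 1 = pf h δ0 K 1 := by
    have hmem : (1 : C(K, ℝ)) ∈ f0.domain := Submodule.mem_span_singleton_self _
    have h1 := hg1 ⟨1, hmem⟩
    have hmem' : (1 : ℝ) • (1 : C(K, ℝ)) ∈ f0.domain := by rwa [one_smul]
    have h2 : f0 ⟨(1 : ℝ) • 1, hmem'⟩ = (1 : ℝ) • pf h δ0 K 1 :=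
      LinearPMap.mkSpanSingleton'_apply _ _ _ 1 hmem'
    simp only [one_smul] at h2
    rw [h2] at h1
    exact h1
  have hgpos : ∀ f : C(K, ℝ), 0 ≤ f → 0 ≤ g f := by
    intro f hf
    have h1 := hg2 (-f)
    have h2 : pf h δ0 K (-f) ≤ 0 := csInf_le Sf_bdd ⟨Empty, inferInstance, Empty.elim, Empty.elim,
      fun i => i.elim, fun x => by simpa using hf x, by simp⟩
    rw [map_neg] at h1
    linarith
  let Λ : C_c(K, ℝ) →ₚ[ℝ] ℝ :=
  { toFun f := g f.toContinuousMap
    map_add' f f' := map_add g f.toContinuousMap f'.toContinuousMap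
    map_smul' c f := map_smul g c f.toContinuousMap
    monotone' f f' hff' := by
      have := hgpos (f'.toContinuousMap - f.toContinuousMap) (fun x => by
        have := hff' x
        simpa using this)
      rw [map_sub] at this
      exact sub_nonneg.1 this }
  set μ : Measure K := RealRMK.rieszMeasure Λ with hμ
  have hint : ∀ f : C(K, ℝ), ∫ x, f x ∂μ = g f := by
    intro f
    let f' : C_c(K, ℝ) := { toFun := f, hasCompactSupport' := HasCompactSupport.of_compactSpace _ }
    exact RealRMK.integral_rieszMeasure Λ f'
  have hμfin : IsFiniteMeasure μ := by rw [hμ]; infer_instance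
  have hμreg : μ.Regular := by rw [hμ]; infer_instance
  have hopen : ∀ V : Set Z, IsOpen V → Metric.ediam V ≤ δ0 → μ (Subtype.val ⁻¹' V) ≤ tau h V := by
    intro V hV hVd
    have hVo : IsOpen (Subtype.val ⁻¹' V : Set K) := hV.preimage continuous_subtype_val
    rw [hVo.measure_eq_iSup_isCompact]
    refine iSup₂_le fun F hFV => iSup_le fun hF => ?_
    obtain ⟨f, hf0, hf1, hf⟩ := exists_continuous_zero_one_of_isClosed
      (hVo.isClosed_compl) hF.isClosed (disjoint_left.2 fun x hx hx' => hx (hFV hx'))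
    have h1 : μ F ≤ ENNReal.ofReal (g f) := by
      rw [← hint f, ofReal_integral_eq_lintegral_ofReal
        (f.continuous.integrable_of_hasCompactSupport (HasCompactSupport.of_compactSpace _))
        (Eventually.of_forall fun x => (hf x).1)]
      calc μ F = ∫⁻ x in F, 1 ∂μ := by simp
        _ ≤ ∫⁻ x in F, ENNReal.ofReal (f x) ∂μ := by
          refine setLIntegral_mono' hF.measurableSet fun x hx => ?_
          rw [hf1 hx]; simp
        _ ≤ _ := setLIntegral_le_lintegral _ _
    refine h1.trans ?_
    have htf : tau h V ≠ ⊤ := ((tau_mono_of hg hVd).trans_lt hP.fin).ne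
    rw [← ENNReal.ofReal_toReal htf]
    refine ENNReal.ofReal_le_ofReal ((hg2 f).trans (csInf_le Sf_bdd ?_))
    refine ⟨Unit, inferInstance, fun _ => V, fun _ => 1, fun _ => hVd, fun x => ?_, by simp⟩
    by_cases hx : (x : Z) ∈ V
    · simpa [hx] using (hf x).2
    · have : f x = 0 := hf0 hx
      simp [hx, this]
  refine ⟨μ.map Subtype.val, inferInstance, ?_, ?_, ?_⟩
  · rw [Measure.map_apply measurable_subtype_coe hK.measurableSet.compl]
    simp
  · rw [Measure.map_apply measurable_subtype_coe MeasurableSet.univ, preimage_univ,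
      pos_iff_ne_zero]
    intro h0
    have h1 : ∫ x, (1 : C(K, ℝ)) x ∂μ = 0 := by
      rw [Measure.measure_univ_eq_zero.1 h0]; simp
    rw [hint, hgone] at h1
    exact hp1.ne' h1
  · intro A hA
    refine ENNReal.le_of_forall_pos_le_add fun ε hε _ => ?_
    obtain ⟨V, hVo, hAV, hVd, hVt⟩ := exists_open_fat hg (ne_top_of_lt hA)
      (tsub_pos_of_lt hA) (ε := ε) (by exact_mod_cast hε)
    refine (measure_mono hAV).trans ?_
    rw [Measure.map_apply measurable_subtype_coe hVo.measurableSet]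
    refine (hopen V hVo (hVd.trans (le_of_eq (add_tsub_cancel_of_le hA.le)))).trans hVt

end frost
end HausAux


namespace HausAux
section dich
variable {Z : Type*} [MetricSpace Z] {h : ℝ≥0 → ℝ≥0∞} {C δ0 : ℝ≥0}

lemma upper_density [TopologicalSpace.SeparableSpace Z] (hP : PP Z h C δ0)
    [MeasurableSpace Z] [BorelSpace Z] (ν : Measure Z) (k : ℕ) (F : Set Z)
    (hF : ∀ x ∈ F, ∀ r : ℝ≥0, 0 < r → ∃ U, IsOpen U ∧ x ∈ U ∧ Metric.ediam U ≤ r ∧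
      tau h U ≤ k * ν U) : hausdorffM h F ≤ 2 * C * (k * ν univ) := by
  have hg := hP.gauge
  have : SecondCountableTopology Z := UniformSpace.secondCountable_of_separable Z
  have key : ∀ δ : ℝ≥0, 0 < δ → δ ≤ δ0 → ct h (6 * δ) F ≤ 2 * C * (k * ν univ) := by
    intro δ hδ hδ0
    choose U hUo hxU hUd hUt using fun x : F => hF x x.2 δ hδ
    obtain ⟨T, hTc, hT⟩ := TopologicalSpace.isOpen_iUnion_countable U hUo
    have := hTc.to_subtype
    obtain ⟨J, -, hJd, hJ⟩ := vitali hP (fun i : T => U i) univ hδ0 (fun i _ => hUd _)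
    have hcov : F ⊆ ⋃ i ∈ (univ : Set T), U i := by
      intro x hx
      have h1 : x ∈ ⋃ i, U i := mem_iUnion.2 ⟨⟨x, hx⟩, hxU _⟩
      rw [← hT] at h1
      obtain ⟨i, hi, hxi⟩ := mem_iUnion₂.1 h1
      exact mem_iUnion₂.2 ⟨⟨i, hi⟩, mem_univ _, hxi⟩
    refine (ct_mono _ hcov).trans (hJ.trans ?_)
    gcongr
    calc ∑' j : J, tau h (U j) ≤ ∑' j : J, k * ν (U j) := ENNReal.tsum_le_tsum fun j => hUt _
      _ = k * ∑' j : J, ν (U j) := ENNReal.tsum_mul_left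
      _ = k * ν (⋃ j ∈ J, U j) := by
        rw [measure_biUnion (to_countable J) hJd fun j _ => (hUo _).measurableSet]
      _ ≤ _ := by gcongr; exact subset_univ _
  refine haus_le hg (T := fun n : ℕ => 6 * ((δ0 / (n + 1) : ℝ≥0) : ℝ≥0∞)) ?_ ?_
  · have h1 : Tendsto (fun n : ℕ => (δ0 / (n + 1) : ℝ≥0)) atTop (𝓝 0) := by
      have h2 := (tendsto_one_div_add_atTop_nhds_zero_nat (𝕜 := ℝ≥0)).const_mul δ0
      simpa [div_eq_mul_inv] using h2
    have h2 := ENNReal.Tendsto.const_mul (a := 6) (ENNReal.tendsto_coe.2 h1) (Or.inr (by simp))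
    simpa using h2
  · intro n
    exact key _ (div_pos hP.pos (by positivity)) (div_le_self bot_le (by simp))

lemma meas_le_haus (hP : PP Z h C δ0) [MeasurableSpace Z] [BorelSpace Z] (ν : Measure Z)
    (hν : ∀ A, Metric.ediam A < δ0 → ν A ≤ tau h A) (F : Set Z) : ν F ≤ hausdorffM h F := by
  have hg := hP.gauge
  have hδ : (0 : ℝ≥0∞) < (δ0 / 2 : ℝ≥0) := by exact_mod_cast half_pos hP.pos
  refine le_trans ?_ (ct_le_haus hg hδ F)
  unfold ct
  refine le_iInf fun t => le_iInf fun ht => le_iInf fun hd => ?_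
  refine (measure_mono ht).trans ((measure_iUnion_le _).trans (ENNReal.tsum_le_tsum fun i => ?_))
  refine hν _ ((hd i).trans_lt ?_)
  exact_mod_cast half_lt_self hP.pos

/-- lower density sets -/
def Cs [MeasurableSpace Z] (h : ℝ≥0 → ℝ≥0∞) (ν : Measure Z) (k n : ℕ) : Set Z :=
  {x | ∀ U, IsOpen U → x ∈ U → Metric.ediam U ≤ ((1 / (n + 1) : ℝ≥0) : ℝ≥0∞) → k * ν U ≤ tau h U}

lemma Cs_closed [MeasurableSpace Z] (ν : Measure Z) (k n : ℕ) : IsClosed (Cs h ν k n) := by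
  rw [← isOpen_compl_iff, isOpen_iff_forall_mem_open]
  intro x hx
  simp only [Cs, mem_compl_iff, mem_ofPred_eq, not_forall] at hx
  obtain ⟨U, hU, hxU, hd, hlt⟩ := hx
  exact ⟨U, fun y hy hy' => hlt (hy' U hU hy hd), hU, hxU⟩

lemma Cs_mono [MeasurableSpace Z] (ν : Measure Z) (k : ℕ) : Monotone (Cs h ν k) := by
  intro m n hmn x hx U hU hxU hd
  refine hx U hU hxU (hd.trans ?_)
  have : (1 / (n + 1) : ℝ≥0) ≤ 1 / (m + 1) := by gcongr
  exact_mod_cast this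

lemma dichotomy [TopologicalSpace.SeparableSpace Z] (hP : PP Z h C δ0)
    [MeasurableSpace Z] [BorelSpace Z] {K : Set Z} (hK : IsCompact K) (hKp : 0 < hausdorffM h K) :
    (∃ F ⊆ K, IsCompact F ∧ 0 < hausdorffM h F ∧ hausdorffM h F < ⊤) ∨
    ∃ L ⊆ K, ∃ l : Measure Z, IsCompact L ∧ IsFiniteMeasure l ∧ l Lᶜ = 0 ∧ 0 < l L ∧
      ∀ M : ℕ, ∃ r : ℝ≥0, 0 < r ∧ ∀ A, Metric.ediam A ≤ r → M * l A ≤ tau h A := by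
  have hg := hP.gauge
  obtain ⟨ν, hfin, hνK, hνp, hν⟩ := frostman hP hK hKp
  have hνK' : 0 < ν K := by
    rw [pos_iff_ne_zero]; intro h0
    refine hνp.ne' (le_antisymm ?_ bot_le)
    rw [← union_compl_self K]
    exact (measure_union_le _ _).trans (by simp [h0, hνK])
  by_cases hcase : ∃ k : ℕ, 0 < ν (K \ ⋃ n, Cs h ν k n)
  · left
    obtain ⟨k, hk⟩ := hcase
    have hm : MeasurableSet (K \ ⋃ n, Cs h ν k n) :=
      hK.measurableSet.diff (MeasurableSet.iUnion fun n => (Cs_closed ν k n).measurableSet)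
    obtain ⟨F, hFs, hFc, hF⟩ := hm.exists_isClosed_lt_add (μ := ν) (measure_ne_top _ _) hk.ne'
    have hFp : 0 < ν F := by
      rw [pos_iff_ne_zero]; intro h0
      simp [h0] at hF
    refine ⟨F, hFs.trans sdiff_subset, hK.of_isClosed_subset hFc (hFs.trans sdiff_subset),
      hFp.trans_le (meas_le_haus hP ν hν F), ?_⟩
    refine (upper_density hP ν k F ?_).trans_lt (by finiteness)
    intro x hx r hr
    have hx2 := (hFs hx).2
    obtain ⟨n, hn⟩ := exists_nat_one_div_lt (K := ℝ≥0) hr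
    have h3 : x ∉ Cs h ν k n := fun h4 => hx2 (mem_iUnion.2 ⟨n, h4⟩)
    simp only [Cs, mem_ofPred_eq, not_forall] at h3
    obtain ⟨U, hU, hxU, hd, hlt⟩ := h3
    exact ⟨U, hU, hxU, hd.trans (by exact_mod_cast hn.le), (not_le.1 hlt).le⟩
  · right
    push Not at hcase
    obtain ⟨e, he, hes⟩ := ENNReal.exists_pos_sum_of_countable' hνK'.ne' ℕ
    have hn : ∀ k, ∃ n, ν (K \ Cs h ν k n) < e k := by
      intro k
      have h1 : Tendsto (fun n => ν (K \ Cs h ν k n)) atTop (𝓝 (ν (⋂ n, K \ Cs h ν k n))) :=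
        tendsto_measure_iInter_atTop
          (fun n => (hK.measurableSet.diff (Cs_closed ν k n).measurableSet).nullMeasurableSet)
          (fun m n hmn => sdiff_subset_sdiff_right (Cs_mono ν k hmn)) ⟨0, measure_ne_top _ _⟩
      rw [← sdiff_iUnion, nonpos_iff_eq_zero.1 (hcase k)] at h1
      exact (h1.eventually (gt_mem_nhds (he k))).exists
    choose n hn using hn
    have hLc : IsCompact (K ∩ ⋂ k, Cs h ν k (n k)) :=
      hK.inter_right (isClosed_iInter fun k => Cs_closed ν k _)
    set L := K ∩ ⋂ k, Cs h ν k (n k) with hL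
    have hLp : 0 < ν L := by
      rw [pos_iff_ne_zero]; intro h0
      have h1 : K ⊆ L ∪ ⋃ k, K \ Cs h ν k (n k) := by
        intro x hx
        by_cases hxL : x ∈ ⋂ k, Cs h ν k (n k)
        · exact Or.inl ⟨hx, hxL⟩
        · right
          simp only [mem_iInter, not_forall] at hxL
          obtain ⟨k, hk⟩ := hxL
          exact mem_iUnion.2 ⟨k, hx, hk⟩
      have h2 : ν K ≤ ∑' k, e k := by
        refine (measure_mono h1).trans ((measure_union_le _ _).trans ?_)
        rw [h0, zero_add]
        exact (measure_iUnion_le _).trans (ENNReal.tsum_le_tsum fun k => (hn k).le)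
      exact absurd hes (not_lt.2 h2)
    refine ⟨L, inter_subset_left, ν.restrict L, hLc, inferInstance, ?_, ?_, ?_⟩
    · rw [Measure.restrict_apply hLc.measurableSet.compl]; simp
    · rwa [Measure.restrict_apply_self]
    · intro M
      refine ⟨1 / (n M + 1) / 2, by positivity, fun A hA => ?_⟩
      refine ENNReal.le_of_forall_pos_le_add fun ε hε _ => ?_
      obtain ⟨V, hVo, hAV, hVd, hVt⟩ := exists_open_fat hg (ne_top_of_le_ne_top (by finiteness) hA)
        (η := ((1 / (n M + 1) / 2 : ℝ≥0) : ℝ≥0∞)) (ε := ε)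
        (by
          have : (0 : ℝ≥0) < 1 / (n M + 1) / 2 := by positivity
          exact_mod_cast this) (by exact_mod_cast hε)
      refine le_trans ?_ hVt
      rcases (V ∩ L).eq_empty_or_nonempty with h0 | ⟨x, hxV, hxL⟩
      · have : ν.restrict L A = 0 := by
          refine measure_mono_null hAV ?_
          rw [Measure.restrict_apply hVo.measurableSet, h0, measure_empty]
        rw [this]; simp
      · have h1 : x ∈ Cs h ν M (n M) := mem_iInter.1 hxL.2 M
        refine le_trans ?_ (h1 V hVo hxV ?_)
        · exact mul_le_mul' le_rfl ((Measure.restrict_apply_le _ _).trans (measure_mono hAV))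
        · refine hVd.trans ((add_le_add_left hA _).trans ?_)
          rw [← ENNReal.coe_add, add_halves]

end dich
end HausAux


namespace HausAux
section halv

lemma half_real (μ : Measure ℝ) [IsFiniteMeasure μ] [NullSingletonClass μ] :
    ∃ t : ℝ, 2 * μ (Iic t) = μ univ ∨ μ univ = 0 := by
  by_cases h0 : μ univ = 0
  · exact ⟨0, Or.inr h0⟩
  have hc : Continuous fun t : ℝ => μ.real (Iic t) := by
    have h1 : Continuous fun b : ℝ => ∫ x in (0 : ℝ)..b, (1 : ℝ) ∂μ :=
      intervalIntegral.continuous_primitive (fun a b => intervalIntegrable_const) 0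
    have h2 : (fun t : ℝ => μ.real (Iic t)) =
        fun b : ℝ => (∫ x in (0 : ℝ)..b, (1 : ℝ) ∂μ) + μ.real (Iic 0) := by
      funext b
      rw [← intervalIntegral.integral_Iic_sub_Iic (integrable_const _).integrableOn
        (integrable_const _).integrableOn]
      simp
    rw [h2]
    exact h1.add continuous_const
  have hh : μ univ / 2 < μ univ := ENNReal.half_lt_self h0 (measure_ne_top _ _)
  obtain ⟨b, hb⟩ := ((tendsto_measure_Iic_atTop μ).eventually (lt_mem_nhds hh)).exists
  obtain ⟨a, ha⟩ := ((tendsto_measure_Ici_atBot μ).eventually (lt_mem_nhds hh)).exists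
  have ha2 : μ (Iic a) ≤ μ univ / 2 := by
    rw [← measure_congr (Iio_ae_eq_Iic (μ := μ) (a := a)), ← compl_Ici,
      measure_compl measurableSet_Ici (measure_ne_top _ _), tsub_le_iff_right]
    calc μ univ = μ univ / 2 + μ univ / 2 := (ENNReal.add_halves _).symm
      _ ≤ _ := by gcongr
  have hr : (μ univ / 2).toReal ∈ range fun t : ℝ => μ.real (Iic t) :=
    mem_range_of_exists_le_of_exists_ge hc
      ⟨a, ENNReal.toReal_mono (by finiteness) ha2⟩
      ⟨b, ENNReal.toReal_mono (by finiteness) hb.le⟩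
  obtain ⟨t, ht⟩ := hr
  refine ⟨t, Or.inl ?_⟩
  have h3 : μ (Iic t) = μ univ / 2 :=
    (ENNReal.toReal_eq_toReal_iff' (by finiteness) (by finiteness)).1 ht
  rw [h3, ENNReal.mul_div_cancel (by simp) (by simp)]

lemma half_set {Z : Type*} [MeasurableSpace Z] [StandardBorelSpace Z] (l : Measure Z)
    [IsFiniteMeasure l] (hl : ∀ x, l {x} = 0) {E : Set Z} (hE : MeasurableSet E) :
    ∃ F ⊆ E, MeasurableSet F ∧ 2 * l F = l E := by
  obtain ⟨φ, hφ⟩ := exists_measurableEmbedding_real Z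
  set μ := (l.restrict E).map φ with hμ
  have hna : NullSingletonClass μ := ⟨fun x => by
    rw [hμ, Measure.map_apply hφ.measurable (measurableSet_singleton x)]
    refine nonpos_iff_eq_zero.1 ((Measure.restrict_apply_le _ _).trans ?_)
    have hs : (φ ⁻¹' {x}).Subsingleton := fun a ha b hb => hφ.injective (ha.trans hb.symm)
    rcases hs.eq_empty_or_singleton with h | ⟨z, h⟩
    · simp [h]
    · rw [h, hl]⟩
  have huniv : μ univ = l E := by
    rw [hμ, Measure.map_apply hφ.measurable MeasurableSet.univ]; simp
  obtain ⟨t, ht⟩ := half_real μ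
  rw [huniv] at ht
  rcases ht with ht | ht
  · refine ⟨φ ⁻¹' (Iic t) ∩ E, inter_subset_right, (hφ.measurable measurableSet_Iic).inter hE, ?_⟩
    rw [hμ, Measure.map_apply hφ.measurable measurableSet_Iic,
      Measure.restrict_apply (hφ.measurable measurableSet_Iic)] at ht
    exact ht
  · exact ⟨∅, empty_subset _, MeasurableSet.empty, by simp [ht]⟩

end halv

section step
variable {Z : Type*} [MetricSpace Z] {h : ℝ≥0 → ℝ≥0∞}

lemma exists_eta (hg : IsGauge h) {D D' ρ ρ' r : ℝ≥0} (hD : D < D') (hρ : ρ' < ρ)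
    (hfin : h ρ < ⊤) (hr : 0 < r) :
    ∃ η : ℝ≥0, 0 < η ∧ ρ' + 2 * η ≤ ρ ∧ ∀ d ∈ Icc r ρ', D * h (d + 2 * η) ≤ D' * h d := by
  have h1 : ∀ᶠ η in 𝓝 (0 : ℝ≥0), ∀ d ∈ Icc r ρ', D * h (d + 2 * η) < D' * h d := by
    refine isCompact_Icc.eventually_forall_of_forall_eventually fun d hd => ?_
    have hf : Continuous fun z : ℝ≥0 × ℝ≥0 => (D : ℝ≥0∞) * h (z.2 + 2 * z.1) :=
      (ENNReal.continuous_const_mul ENNReal.coe_ne_top).comp (hg.cont.comp (by fun_prop))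
    have hf' : Continuous fun z : ℝ≥0 × ℝ≥0 => (D' : ℝ≥0∞) * h z.2 :=
      (ENNReal.continuous_const_mul ENNReal.coe_ne_top).comp (hg.cont.comp (by fun_prop))
    refine (isOpen_lt hf hf').mem_nhds ?_
    show (D : ℝ≥0∞) * h (d + 2 * 0) < D' * h d
    rw [mul_zero, add_zero]
    have hd0 : h d ≠ 0 := (hg.pos d (hr.trans_le hd.1)).ne'
    have hdt : h d ≠ ⊤ := ((hg.mono (hd.2.trans hρ.le)).trans_lt hfin).ne
    exact (ENNReal.mul_lt_mul_iff_left hd0 hdt).2 (by exact_mod_cast hD)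
  have h2 : ∀ᶠ η in 𝓝 (0 : ℝ≥0), ρ' + 2 * η < ρ := by
    have : Tendsto (fun η : ℝ≥0 => ρ' + 2 * η) (𝓝 0) (𝓝 (ρ' + 2 * 0)) :=
      Continuous.tendsto (by fun_prop) 0
    exact this.eventually (gt_mem_nhds (by simpa using hρ))
  obtain ⟨η, ⟨ha, hb⟩, hη⟩ := (((h1.and h2).filter_mono nhdsWithin_le_nhds).and
    (self_mem_nhdsWithin (s := Ioi (0 : ℝ≥0)))).exists
  exact ⟨η, hη, hb.le, fun d hd => (ha d hd).le⟩

lemma step [TopologicalSpace.SeparableSpace Z] [CompleteSpace Z] [MeasurableSpace Z] [BorelSpace Z]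
    (hg : IsGauge h) {l : Measure Z} [IsFiniteMeasure l]
    (hM : ∀ M : ℕ, ∃ r : ℝ≥0, 0 < r ∧ ∀ A, Metric.ediam A ≤ r → M * l A ≤ tau h A)
    {K : Set Z} (hK : IsCompact K) {c : ℕ} (hc : 0 < c) {a : ℝ≥0∞} {D D' ρ ρ' : ℝ≥0}
    (hD : D < D') (hD1 : 1 ≤ D') (hρ : ρ' < ρ) (hfin : h ρ < ⊤) (ha : a < c * l K)
    (hb : ∀ A, Metric.ediam A ≤ ρ → c * l (A ∩ K) ≤ D * tau h A) :
    ∃ K' ⊆ K, IsCompact K' ∧ a < (2 * c : ℕ) * l K' ∧ 2 * l K' ≤ l K ∧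
      ∀ A, Metric.ediam A ≤ ρ' → (2 * c : ℕ) * l (A ∩ K') ≤ D' * tau h A := by
  have : SecondCountableTopology Z := UniformSpace.secondCountable_of_separable Z
  have : PolishSpace Z := inferInstance
  have hna : ∀ x, l {x} = 0 := by
    intro x
    obtain ⟨r, hr, h1⟩ := hM 1
    have h2 := h1 {x} (by simp)
    simpa [tau, hg.zero] using h2
  obtain ⟨r, hr, hrM⟩ := hM (2 * c)
  obtain ⟨η, hη, hηρ, hηD⟩ := exists_eta hg hD hρ hfin hr
  obtain ⟨As, hAm, hAb, hAd, hAu, hAdis⟩ :=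
    SeparableSpace.exists_measurable_partition_diam_le Z (ε := (η : ℝ)) (by exact_mod_cast hη)
  have hAe : ∀ n, ∀ x ∈ As n, ∀ y ∈ As n, edist x y ≤ η := by
    intro n x hx y hy
    rw [edist_nndist]
    have := (Metric.dist_le_diam_of_mem (hAb n) hx hy).trans (hAd n)
    exact_mod_cast this
  choose F hFs hFm hF2 using fun n => half_set l hna ((hAm n).inter hK.measurableSet)
  have hFdis : Pairwise (Function.onFun Disjoint F) := fun m n hmn =>
    (hAdis hmn).mono ((hFs m).trans inter_subset_left) ((hFs n).trans inter_subset_left)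
  have hFK : (⋃ n, F n) ⊆ K := iUnion_subset fun n => (hFs n).trans inter_subset_right
  have hUm : MeasurableSet (⋃ n, F n) := MeasurableSet.iUnion hFm
  have hU2 : 2 * l (⋃ n, F n) = l K := by
    rw [measure_iUnion hFdis hFm, ← ENNReal.tsum_mul_left]
    simp_rw [hF2]
    rw [← measure_iUnion (fun m n hmn => (hAdis hmn).mono inter_subset_left inter_subset_left)
      (fun n => (hAm n).inter hK.measurableSet), ← iUnion_inter, hAu, univ_inter]
  have hc0 : ((2 * c : ℕ) : ℝ≥0∞) ≠ 0 := by exact_mod_cast (by omega : 2 * c ≠ 0)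
  have hct : ((2 * c : ℕ) : ℝ≥0∞) ≠ ⊤ := ENNReal.natCast_ne_top _
  have haU : a / (2 * c : ℕ) < l (⋃ n, F n) := by
    rw [ENNReal.div_lt_iff (Or.inl hc0) (Or.inl hct)]
    refine ha.trans_le (le_of_eq ?_)
    rw [← hU2]; push_cast; ring
  obtain ⟨K', hK'F, hK'c, hK'⟩ := hUm.exists_lt_isClosed_of_ne_top (measure_ne_top l _) haU
  refine ⟨K', hK'F.trans hFK, hK.of_isClosed_subset hK'c (hK'F.trans hFK), ?_, ?_, ?_⟩
  · rw [ENNReal.div_lt_iff (Or.inl hc0) (Or.inl hct)] at hK'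
    rwa [mul_comm]
  · rw [← hU2]; gcongr
  · intro A hA
    rcases le_or_gt (Metric.ediam A) r with hAr | hAr
    · calc ((2 * c : ℕ) : ℝ≥0∞) * l (A ∩ K') ≤ (2 * c : ℕ) * l A := by
            gcongr; exact inter_subset_left
        _ ≤ tau h A := hrM A hAr
        _ = 1 * tau h A := (one_mul _).symm
        _ ≤ _ := by gcongr; exact_mod_cast hD1
    · set I : Set ℕ := {n | (As n ∩ A).Nonempty} with hI
      set B := ⋃ n ∈ I, As n with hB
      have hAt : Metric.ediam A ≠ ⊤ := ne_top_of_le_ne_top ENNReal.coe_ne_top hA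
      set d := (Metric.ediam A).toNNReal with hd
      have hdA : Metric.ediam A = d := (ENNReal.coe_toNNReal hAt).symm
      have hBd : Metric.ediam B ≤ ((d + 2 * η : ℝ≥0) : ℝ≥0∞) := by
        refine Metric.ediam_le fun x hx y hy => ?_
        obtain ⟨m, ⟨x', hx'1, hx'2⟩, hxm⟩ := mem_iUnion₂.1 hx
        obtain ⟨n, ⟨y', hy'1, hy'2⟩, hyn⟩ := mem_iUnion₂.1 hy
        calc edist x y ≤ edist x x' + edist x' y' + edist y' y := edist_triangle4 _ _ _ _
          _ ≤ η + d + η := by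
            gcongr
            · exact hAe m x hxm x' hx'1
            · rw [← hdA]; exact Metric.edist_le_ediam_of_mem hx'2 hy'2
            · exact hAe n y' hy'1 y hyn
          _ = _ := by push_cast; ring
      have hd1 : r ≤ d := by rw [hdA] at hAr; exact_mod_cast hAr.le
      have hd2 : d ≤ ρ' := by rw [hdA] at hA; exact_mod_cast hA
      have hBρ : Metric.ediam B ≤ ρ := hBd.trans (by
        have : d + 2 * η ≤ ρ := le_trans (by gcongr) hηρ
        exact_mod_cast this)
      have hsub : A ∩ K' ⊆ ⋃ n ∈ I, F n := by
        rintro x ⟨hxA, hxK⟩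
        obtain ⟨n, hn⟩ := mem_iUnion.1 (hK'F hxK)
        exact mem_iUnion₂.2 ⟨n, ⟨x, (hFs n hn).1, hxA⟩, hn⟩
      have h2 : 2 * l (A ∩ K') ≤ l (B ∩ K) := by
        calc 2 * l (A ∩ K') ≤ 2 * l (⋃ n ∈ I, F n) := by gcongr
          _ = ∑' n : I, 2 * l (F n) := by
            rw [measure_biUnion (to_countable I) (fun m _ n _ hmn => hFdis hmn) fun n _ => hFm n,
              ENNReal.tsum_mul_left]
          _ = ∑' n : I, l (As n ∩ K) := by simp_rw [hF2]
          _ = l (⋃ n ∈ I, As n ∩ K) := by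
            rw [measure_biUnion (to_countable I) (fun m _ n _ hmn =>
              (hAdis hmn).mono inter_subset_left inter_subset_left)
              fun n _ => (hAm n).inter hK.measurableSet]
          _ ≤ _ := measure_mono (by rw [hB, iUnion₂_inter])
      calc ((2 * c : ℕ) : ℝ≥0∞) * l (A ∩ K') = c * (2 * l (A ∩ K')) := by push_cast; ring
        _ ≤ c * l (B ∩ K) := by gcongr
        _ ≤ D * tau h B := hb B hBρ
        _ ≤ D * h (d + 2 * η) := by gcongr; exact tau_mono_of hg hBd
        _ ≤ D' * h d := hηD d ⟨hd1, hd2⟩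
        _ = D' * tau h A := rfl

end step
end HausAux


namespace HausAux
section cantor
variable {Z : Type*} [MetricSpace Z] {h : ℝ≥0 → ℝ≥0∞}

lemma null_compact [TopologicalSpace.SeparableSpace Z] [CompleteSpace Z] [MeasurableSpace Z]
    [BorelSpace Z] (hg : IsGauge h) {l : Measure Z} [IsFiniteMeasure l]
    (hM : ∀ M : ℕ, ∃ r : ℝ≥0, 0 < r ∧ ∀ A, Metric.ediam A ≤ r → M * l A ≤ tau h A)
    {L : Set Z} (hL : IsCompact L) (hLp : 0 < l L) {δ0 : ℝ≥0} (hδ0 : 0 < δ0) (hfin : h δ0 < ⊤) :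
    ∃ F ⊆ L, IsCompact F ∧ l F = 0 ∧ 0 < hausdorffM h F := by
  obtain ⟨r, hr, hr1⟩ := hM 1
  obtain ⟨a, ha0, haL⟩ := exists_between hLp
  obtain ⟨ρ, hρ0, hρr, hρδ⟩ : ∃ ρ : ℝ≥0, 0 < ρ ∧ 2 * ρ ≤ r ∧ 2 * ρ ≤ δ0 := by
    refine ⟨min r δ0 / 2, half_pos (lt_min hr hδ0), ?_, ?_⟩
    · rw [mul_div_cancel₀ _ two_ne_zero]; exact min_le_left _ _
    · rw [mul_div_cancel₀ _ two_ne_zero]; exact min_le_right _ _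
  let rs : ℕ → ℝ≥0 := fun k => ρ * (1 + 1 / (k + 1))
  let Ds : ℕ → ℝ≥0 := fun k => 2 - 1 / (k + 1)
  have hlt : ∀ k : ℕ, (1 / ((k + 1 : ℕ) + 1) : ℝ≥0) < 1 / (k + 1) := by
    intro k
    exact one_div_lt_one_div_of_lt (by positivity) (by push_cast; exact lt_add_one _)
  have hle1 : ∀ k : ℕ, (1 / (k + 1) : ℝ≥0) ≤ 1 := by
    intro k
    exact div_le_self zero_le_one (by simp) |>.trans le_rfl
  have hrs : ∀ k, rs (k + 1) < rs k := by
    intro k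
    exact mul_lt_mul_of_pos_left (add_lt_add_right (hlt k) _) hρ0
  have hDs : ∀ k, Ds k < Ds (k + 1) := by
    intro k
    exact tsub_lt_tsub_left_of_le ((hle1 k).trans one_le_two) (hlt k)
  have hD1 : ∀ k, 1 ≤ Ds k := by
    intro k
    refine le_tsub_of_add_le_right ?_
    rw [← one_add_one_eq_two]
    exact add_le_add_right (hle1 k) _
  have hrs2 : ∀ k, rs k ≤ 2 * ρ := by
    intro k
    rw [mul_comm 2, ← one_add_one_eq_two]
    exact mul_le_mul_right (add_le_add_right (hle1 k) _) _
  have hrs1 : ∀ k, ρ ≤ rs k := fun k => le_mul_of_one_le_right' (by simp)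
  let Good : ℕ → Set Z → Prop := fun k K => IsCompact K ∧ a < (2 ^ k : ℕ) * l K ∧
    ∀ A, Metric.ediam A ≤ rs k → (2 ^ k : ℕ) * l (A ∩ K) ≤ Ds k * tau h A
  have hstep : ∀ k (x : {K // Good k K}), ∃ y : {K // Good (k + 1) K},
      y.1 ⊆ x.1 ∧ 2 * l y.1 ≤ l x.1 := by
    rintro k ⟨K, hK, hKa, hKb⟩
    obtain ⟨K', h1, h2, h3, h4, h5⟩ := step hg hM hK (c := 2 ^ k) (by positivity) (hDs k) (hD1 _)
      (hrs k) ((hg.mono ((hrs2 k).trans hρδ)).trans_lt hfin) hKa hKb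
    rw [← pow_succ'] at h3 h5
    exact ⟨⟨K', h2, h3, h5⟩, h1, h4⟩
  choose nx hnx1 hnx2 using hstep
  have h0 : Good 0 L := by
    refine ⟨hL, by simpa using haL, fun A hA => ?_⟩
    have h1 := hr1 A (hA.trans (by exact_mod_cast (hrs2 0).trans hρr))
    calc ((2 ^ 0 : ℕ) : ℝ≥0∞) * l (A ∩ L) ≤ (1 : ℕ) * l A := by
          simp only [pow_zero]; gcongr; exact inter_subset_left
      _ ≤ tau h A := h1
      _ = 1 * tau h A := (one_mul _).symm
      _ ≤ _ := by gcongr; exact_mod_cast hD1 0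
  let sq : (k : ℕ) → {K // Good k K} := fun k => Nat.rec ⟨L, h0⟩ (fun k x => nx k x) k
  let Ks : ℕ → Set Z := fun k => (sq k).1
  have hKs : ∀ k, Ks (k + 1) ⊆ Ks k := fun k => hnx1 k (sq k)
  have hKs2 : ∀ k, 2 * l (Ks (k + 1)) ≤ l (Ks k) := fun k => hnx2 k (sq k)
  have hanti : Antitone Ks := antitone_nat_of_succ_le hKs
  have hgood : ∀ k, Good k (Ks k) := fun k => (sq k).2
  have hFc : IsCompact (⋂ k, Ks k) :=
    (hgood 0).1.of_isClosed_subset (isClosed_iInter fun k => (hgood k).1.isClosed) (iInter_subset _ 0)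
  refine ⟨⋂ k, Ks k, iInter_subset Ks 0, hFc, ?_, ?_⟩
  · have h1 : ∀ k, 2 ^ k * l (Ks k) ≤ l L := by
      intro k
      induction k with
      | zero => simp [Ks, sq]
      | succ k ih =>
        refine le_trans ?_ ih
        rw [pow_succ, mul_assoc]
        gcongr
        exact hKs2 k
    have h2 : ∀ k : ℕ, l (⋂ k, Ks k) ≤ l L / 2 ^ k := by
      intro k
      refine (measure_mono (iInter_subset _ k)).trans ?_
      rw [ENNReal.le_div_iff_mul_le (by simp) (by simp), mul_comm]
      exact h1 k
    exact nonpos_iff_eq_zero.1 (ge_of_tendsto' (tendsto_div_pow (measure_ne_top l L)) h2)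
  · rw [pos_iff_ne_zero]
    intro hz
    have hct : ct h ((ρ / 2 : ℝ≥0) : ℝ≥0∞) (⋂ k, Ks k) < a / 2 := by
      refine lt_of_le_of_lt (ct_le_haus hg ?_ _) ?_
      · exact_mod_cast half_pos hρ0
      · rw [hz]; exact ENNReal.half_pos ha0.ne'
    obtain ⟨t, hcov, hto, htd, hts⟩ := exists_open_cover hg (δ' := (ρ : ℝ≥0∞))
      (by exact_mod_cast half_lt_self hρ0) hct
    obtain ⟨k, hk⟩ := exists_subset_nhds_of_isCompact' (hanti.directed_ge) (fun k => (hgood k).1)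
      (fun k => (hgood k).1.isClosed) (fun x hx => (isOpen_iUnion hto).mem_nhds (hcov hx))
    have h3 := (hgood k).2.1
    refine absurd h3 (not_lt.2 ?_)
    calc ((2 ^ k : ℕ) : ℝ≥0∞) * l (Ks k) ≤ (2 ^ k : ℕ) * l (⋃ i, t i ∩ Ks k) := by
          gcongr
          rw [← iUnion_inter]
          exact subset_inter hk le_rfl
      _ ≤ (2 ^ k : ℕ) * ∑' i, l (t i ∩ Ks k) := by gcongr; exact measure_iUnion_le _
      _ = ∑' i, (2 ^ k : ℕ) * l (t i ∩ Ks k) := ENNReal.tsum_mul_left.symm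
      _ ≤ ∑' i, 2 * tau h (t i) := by
          refine ENNReal.tsum_le_tsum fun i => ?_
          refine ((hgood k).2.2 (t i) ((htd i).trans (by exact_mod_cast hrs1 k))).trans ?_
          gcongr
          have : Ds k ≤ 2 := tsub_le_self
          exact_mod_cast this
      _ = 2 * ∑' i, tau h (t i) := ENNReal.tsum_mul_left
      _ ≤ 2 * (a / 2) := by gcongr
      _ = a := ENNReal.mul_div_cancel (by simp) (by simp)

lemma zorn_fam (P : Set Z → Prop) : ∃ D : Set (Set Z), D.Pairwise Disjoint ∧ (∀ K ∈ D, P K) ∧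
    ∀ K, P K → Disjoint K (⋃₀ D) → K ∈ D := by
  obtain ⟨D, hD⟩ := zorn_subset {D : Set (Set Z) | D.Pairwise Disjoint ∧ ∀ K ∈ D, P K} (by
    intro c hc hch
    refine ⟨⋃₀ c, ⟨?_, ?_⟩, fun s hs => subset_sUnion_of_mem hs⟩
    · exact (pairwise_sUnion hch.directedOn).2 fun s hs => (hc hs).1
    · rintro K ⟨s, hs, hK⟩
      exact (hc hs).2 K hK)
  refine ⟨D, hD.prop.1, hD.prop.2, fun K hK hdis => ?_⟩
  have h1 : insert K D ∈ {D : Set (Set Z) | D.Pairwise Disjoint ∧ ∀ K ∈ D, P K} := by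
    refine ⟨?_, ?_⟩
    · refine hD.prop.1.insert_of_symm fun K' hK' _ => ?_
      exact hdis.mono_right (subset_sUnion_of_mem hK')
    · rintro K' (rfl | hK')
      · exact hK
      · exact hD.prop.2 K' hK'
  exact hD.le_of_ge h1 (subset_insert _ _) (mem_insert _ _)

theorem main (Y : Set Z) (hH : PropertyHInf Y h) :
    ∃ D : Set (Set Z), ¬ D.Countable ∧ D.Pairwise Disjoint ∧
      ∀ K ∈ D, IsCompact K ∧ K ⊆ Y ∧ 0 < hausdorffM h K := by
  obtain ⟨⟨hcomp, hsep, hY, hh, hcont, hzero, halt⟩, hns⟩ := hH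
  have hg : IsGauge h := ⟨hh.mono, hcont, hzero, hh.pos⟩
  obtain ⟨C, δ0, hP⟩ := exists_PP hg halt
  let _ : MeasurableSpace Z := borel Z
  have : BorelSpace Z := ⟨rfl⟩
  have : SecondCountableTopology Z := UniformSpace.secondCountable_of_separable Z
  have hpol : PolishSpace Z := inferInstance
  obtain ⟨D, hD1, hD2, hD3⟩ := zorn_fam (fun K : Set Z => IsCompact K ∧ K ⊆ Y ∧
    0 < hausdorffM h K ∧ hausdorffM h K < ⊤)
  by_cases hDc : D.Countable
  swap
  · exact ⟨D, hDc, hD1, fun K hK => ⟨(hD2 K hK).1, (hD2 K hK).2.1, (hD2 K hK).2.2.1⟩⟩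
  have hcar : ∀ s : Set Z, MeasurableSet s → (hausdorffM (Z := Z) h).IsCaratheodory s := by
    intro s hs
    have h1 : (hausdorffM (Z := Z) h).IsMetric := OuterMeasure.mkMetric'_isMetric _
    exact h1.borel_le_caratheodory s hs
  have hDm : MeasurableSet (⋃₀ D) := MeasurableSet.sUnion hDc fun K hK => (hD2 K hK).1.measurableSet
  have hN : AnalyticSet (Y \ ⋃₀ D) := by
    rw [sdiff_eq]
    rw [inter_eq_iInter]
    refine AnalyticSet.iInter fun b => ?_
    cases b
    · exact hDm.compl.analyticSet
    · exact hY
  have hNp : 0 < hausdorffM h (Y \ ⋃₀ D) := by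
    rw [pos_iff_ne_zero]
    intro h0
    refine hns ?_
    have hDY : ⋃₀ D ⊆ Y := sUnion_subset fun K hK => (hD2 K hK).2.1
    obtain ⟨f, hf⟩ : ∃ f : ℕ → Set Z, insert ∅ D = range f :=
      (hDc.insert ∅).exists_eq_range (insert_nonempty _ _)
    have hfD : ∀ n, f n = ∅ ∨ f n ∈ D := fun n => by
      have : f n ∈ insert ∅ D := hf ▸ mem_range_self n
      exact this
    refine ⟨fun n => Nat.casesOn n (Y \ ⋃₀ D) f, ?_, ?_⟩
    · rintro (_ | n)
      · refine ⟨?_, by simp [h0]⟩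
        refine (OuterMeasure.isCaratheodory_iff_le' _).2 fun t => ?_
        show hausdorffM h (t ∩ (Y \ ⋃₀ D)) + hausdorffM h (t \ (Y \ ⋃₀ D)) ≤ _
        rw [measure_mono_null inter_subset_right h0, zero_add]
        exact measure_mono sdiff_subset
      · rcases hfD n with h1 | h1
        · simp only [h1]
          exact ⟨OuterMeasure.isCaratheodory_empty _, by simp⟩
        · exact ⟨hcar _ (hD2 _ h1).1.measurableSet, (hD2 _ h1).2.2.2⟩
    · apply Subset.antisymm
      · intro y hy
        by_cases hyD : y ∈ ⋃₀ D
        · obtain ⟨K, hK, hyK⟩ := hyD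
          have : K ∈ range f := hf ▸ mem_insert_of_mem _ hK
          obtain ⟨n, rfl⟩ := this
          exact mem_iUnion.2 ⟨n + 1, hyK⟩
        · exact mem_iUnion.2 ⟨0, hy, hyD⟩
      · refine iUnion_subset ?_
        rintro (_ | n)
        · exact sdiff_subset
        · rcases hfD n with h1 | h1
          · simp [h1]
          · exact (subset_sUnion_of_mem h1).trans hDY
  obtain ⟨K, hKN, hK, hKp⟩ := compact_of_analytic hP hN hNp
  rcases dichotomy hP hK hKp with ⟨F, hFK, hFc, hFp, hFt⟩ | ⟨L, hLK, l, hL, hlf, -, hLp, hM⟩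
  · exfalso
    have hdis : Disjoint F (⋃₀ D) := disjoint_left.2 fun x hx hx' => (hKN (hFK hx)).2 hx'
    have hFD := hD3 F ⟨hFc, fun x hx => (hKN (hFK hx)).1, hFp, hFt⟩ hdis
    have hFe : F = ∅ := by
      have := hdis.mono_right (subset_sUnion_of_mem hFD)
      exact disjoint_self.1 this
    rw [hFe] at hFp
    simp at hFp
  obtain ⟨E, hE1, hE2, hE3⟩ := zorn_fam (fun K : Set Z => IsCompact K ∧ K ⊆ L ∧
    0 < hausdorffM h K ∧ l K = 0)
  refine ⟨E, fun hEc => ?_, hE1, fun K' hK' => ⟨(hE2 K' hK').1,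
    fun x hx => (hKN (hLK ((hE2 K' hK').2.1 hx))).1, (hE2 K' hK').2.2.1⟩⟩
  have hEm : MeasurableSet (⋃₀ E) := MeasurableSet.sUnion hEc fun K hK => (hE2 K hK).1.measurableSet
  have hE0 : l (⋃₀ E) = 0 := (measure_sUnion_null_iff hEc).2 fun K hK => (hE2 K hK).2.2.2
  have hLE : 0 < l (L \ ⋃₀ E) := by rwa [measure_sdiff_null hE0]
  obtain ⟨L', hL's, hL'c, hL'⟩ := (hL.measurableSet.diff hEm).exists_lt_isClosed_of_ne_top
    (measure_ne_top l _) hLE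
  obtain ⟨F, hF1, hF2, hF3, hF4⟩ := null_compact hg hM
    (hL.of_isClosed_subset hL'c (hL's.trans sdiff_subset)) hL' hP.pos hP.fin
  have hdis : Disjoint F (⋃₀ E) := disjoint_left.2 fun x hx hx' => (hL's (hF1 hx)).2 hx'
  have hFE := hE3 F ⟨hF2, fun x hx => (hL's (hF1 hx)).1, hF4, hF3⟩ hdis
  have hFe : F = ∅ := by
    have := hdis.mono_right (subset_sUnion_of_mem hFE)
    exact disjoint_self.1 this
  rw [hFe] at hF4
  simp at hF4

end cantor
end HausAux

/-- Corollary of Howroyd's theorem. -/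
theorem statement_3 {Z : Type*} [MetricSpace Z] (Y : Set Z) (h : ℝ≥0 → ℝ≥0∞)
    (hH : PropertyHInf Y h) :
    ∃ D : Set (Set Z), ¬ D.Countable ∧ D.Pairwise Disjoint ∧
      ∀ K ∈ D, IsCompact K ∧ K ⊆ Y ∧ 0 < hausdorffM h K := by
  exact HausAux.main Y hH
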